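/- arXiv:1805.11323 — 2 statements merged into one kernel-verified Lean document; each statement's English description precedes it below -/
import Mathlib

section
/- Assume the single-operator reduction identity: there are μ ∈ ℂ, an integer S ≥ 0, and F : ℂ → ℂ such that, setting C := (μ−1)(β_1+β_2)/(β_1 β_2), for every complex u and every generic tuple v̄ = (v_1,…,v_S) the operator identity ν_{12}(u) ν_{12}(v̄) = C·( F(u) g(u, v̄) ν_{12}(v̄) + Σ_{i=1}^{S} g(v_i, u) F(v_i) g(v_i, v̄_i) ν_{12}(u) ν_{12}(v̄_i) ) holds. Then for every generic tuple w̄ of length p ≥ S one has the multiple-action reduction ν_{12}(w̄) |0⟩ = C^{p−S} Σ_{w̄ ⇒ {w̄_I, w̄_II}} F(w̄_I)·g(w̄_I, w̄_II)·ν_{12}(w̄_II) |0⟩, where the sum runs over all partitions of w̄ into disjoint subtuples with #w̄_I = p − S and #w̄_II = S; in particular, for tuples ū (length n) and v̄ (length m) with n + m ≥ S, ν_{12}(ū) ν_{12}(v̄) |0⟩ is given by this formula with w̄ = {ū, v̄} and p = n + m. -/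
open scoped BigOperators

noncomputable section

/-- The rational function `g(u,v) = c/(u-v)`. -/
def gC (c u v : ℂ) : ℂ := c / (u - v)

/-- The rational function `f(u,v) = (u-v+c)/(u-v)`. -/
def fC (c u v : ℂ) : ℂ := (u - v + c) / (u - v)

/-- The rational function `h(u,v) = (u-v+c)/c`. -/
def hC (c u v : ℂ) : ℂ := (u - v + c) / c

/-- A family of parameters is generic if all pairwise differences avoid `0, ±c, ±2c`. -/
def Generic (c : ℂ) {ι : Type*} (w : ι → ℂ) : Prop :=
  ∀ i j, i ≠ j → w i - w j ≠ 0 ∧ w i - w j ≠ c ∧ w i - w j ≠ -c ∧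
    w i - w j ≠ 2 * c ∧ w i - w j ≠ -2 * c

/-- The modified Izergin determinant `K^{(z)}(x̄|ȳ)`. -/
def KIz (c z : ℂ) {ι κ : Type*} [Fintype ι] [Fintype κ] [DecidableEq κ]
    (x : ι → ℂ) (y : κ → ℂ) : ℂ :=
  Matrix.det (Matrix.of fun j k : κ =>
    -z * (if j = k then 1 else 0) +
      (∏ i, fC c (x i) (y j)) * (∏ i ∈ Finset.univ.erase j, fC c (y j) (y i))
        / hC c (y j) (y k))

/-- The conjugated modified Izergin determinant: `c` is replaced by `-c`. -/
def KIzBar (c z : ℂ) {ι κ : Type*} [Fintype ι] [Fintype κ] [DecidableEq κ]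
    (x : ι → ℂ) (y : κ → ℂ) : ℂ :=
  KIz (-c) z x y

/-- Restriction of a tuple to a subtuple indexed by a `Finset`. -/
def restr {p : ℕ} (w : Fin p → ℂ) (s : Finset (Fin p)) : {x // x ∈ s} → ℂ :=
  fun i => w i.1

/-- Double product `f(w̄_s, w̄_t)` over two subtuples of a tuple. -/
def fSS (c : ℂ) {p : ℕ} (w : Fin p → ℂ) (s t : Finset (Fin p)) : ℂ :=
  ∏ i ∈ s, ∏ j ∈ t, fC c (w i) (w j)

/-- Ordered product of operators over a subtuple (the operators pairwise commute,
so the order is irrelevant). -/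
def opProd {V : Type*} [AddCommGroup V] [Module ℂ V] {p : ℕ}
    (op : ℂ → Module.End ℂ V) (w : Fin p → ℂ) (s : Finset (Fin p)) : Module.End ℂ V :=
  ((s.sort (· ≤ ·)).map (fun i => op (w i))).prod

/-- The index subsets of a partition of `Fin p` into three parts. -/
def parts {p : ℕ} (σ : Fin p → Fin 3) (k : Fin 3) : Finset (Fin p) :=
  Finset.univ.filter (fun i => σ i = k)

section Helpers

variable {V : Type*} [AddCommGroup V] [Module ℂ V]

lemma opProd_eq_noncomm {p : ℕ} (op : ℂ → Module.End ℂ V)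
    (hcomm : ∀ x y, op x * op y = op y * op x) (w : Fin p → ℂ) (s : Finset (Fin p)) :
    opProd op w s = s.noncommProd (fun i => op (w i)) (fun i _ j _ _ => hcomm _ _) := by
  unfold opProd Finset.noncommProd
  have h : s.1.map (fun i => op (w i)) =
      (((s.sort (· ≤ ·)).map (fun i => op (w i)) : List _) : Multiset _) := by
    conv_lhs => rw [← Finset.sort_eq s (· ≤ ·)]
    rfl
  simp only [h]
  rw [Multiset.noncommProd_coe]

lemma opProd_empty {p : ℕ} (op : ℂ → Module.End ℂ V) (w : Fin p → ℂ) :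
    opProd op w ∅ = 1 := by
  simp [opProd]

lemma opProd_insert {p : ℕ} (op : ℂ → Module.End ℂ V)
    (hcomm : ∀ x y, op x * op y = op y * op x) (w : Fin p → ℂ) (s : Finset (Fin p))
    (a : Fin p) (ha : a ∉ s) :
    opProd op w (insert a s) = op (w a) * opProd op w s := by
  rw [opProd_eq_noncomm op hcomm, opProd_eq_noncomm op hcomm]
  exact Finset.noncommProd_insert_of_notMem s a (fun i => op (w i))
    (fun i _ j _ _ => hcomm (w i) (w j)) ha

lemma opProd_map {p q : ℕ} (op : ℂ → Module.End ℂ V)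
    (hcomm : ∀ x y, op x * op y = op y * op x) (w : Fin p → ℂ) (e : Fin q ↪ Fin p)
    (s : Finset (Fin q)) :
    opProd op (fun i => w (e i)) s = opProd op w (s.map e) := by
  induction s using Finset.induction_on with
  | empty => simp [opProd_empty]
  | insert a s ha ih =>
    rw [Finset.map_insert, opProd_insert op hcomm _ _ _ ha, opProd_insert op hcomm, ih]
    simpa using ha

lemma opProd_union {p : ℕ} (op : ℂ → Module.End ℂ V)
    (hcomm : ∀ x y, op x * op y = op y * op x) (w : Fin p → ℂ) (s t : Finset (Fin p))
    (hd : Disjoint s t) :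
    opProd op w (s ∪ t) = opProd op w s * opProd op w t := by
  induction s using Finset.induction_on with
  | empty => simp [opProd_empty]
  | insert a s ha ih =>
    rw [Finset.disjoint_insert_left] at hd
    rw [Finset.insert_union, opProd_insert op hcomm _ _ _ ha, opProd_insert op hcomm, ih hd.2,
      mul_assoc]
    simp [ha, hd.1]

lemma lagrange_gC {ι : Type*} [DecidableEq ι] (c : ℂ) (hc : c ≠ 0) (w : ι → ℂ) (s : Finset ι)
    (hs : s.Nonempty) (a : ℂ) (hw : ∀ i ∈ s, ∀ j ∈ s, i ≠ j → w i ≠ w j)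
    (ha : ∀ i ∈ s, w i ≠ a) :
    ∑ i ∈ s, gC c (w i) a * ∏ j ∈ s.erase i, gC c (w j) (w i) = ∏ i ∈ s, gC c (w i) a := by
  have h1 : ∑ i ∈ s, Lagrange.basis s w i = 1 :=
    Lagrange.sum_basis (fun i hi j hj h => by
      by_contra hne
      exact hw i hi j hj hne h) hs
  have h2 := congrArg (Polynomial.eval a) h1
  rw [Polynomial.eval_finsetSum, Polynomial.eval_one] at h2
  rw [← mul_one (∏ i ∈ s, gC c (w i) a), ← h2, Finset.mul_sum]
  refine Finset.sum_congr rfl fun i hi => ?_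
  rw [← Finset.mul_prod_erase s _ hi, mul_assoc, Lagrange.basis, Polynomial.eval_prod,
    ← Finset.prod_mul_distrib]
  congr 1
  refine Finset.prod_congr rfl fun j hj => ?_
  have hj' := Finset.mem_erase.1 hj
  have e1 : w j - a ≠ 0 := sub_ne_zero.2 (ha j hj'.2)
  have e2 : w i - w j ≠ 0 := sub_ne_zero.2 (hw i hi j hj'.2 (Ne.symm hj'.1))
  have e3 : w j - w i ≠ 0 := sub_ne_zero.2 (hw j hj'.2 i hi hj'.1)
  simp only [Lagrange.basisDivisor, gC, Polynomial.eval_mul, Polynomial.eval_C,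
    Polynomial.eval_sub, Polynomial.eval_X]
  field_simp
  ring

lemma single_set (c : ℂ) (op : ℂ → Module.End ℂ V)
    (hcomm : ∀ x y, op x * op y = op y * op x) (S : ℕ) (F : ℂ → ℂ) (C : ℂ)
    (hSingle : ∀ (x : ℂ) (w : Fin S → ℂ), Generic c (Fin.cons x w : Fin (S + 1) → ℂ) →
      op x * opProd op w Finset.univ
        = (C * F x * ∏ i, gC c x (w i)) • opProd op w Finset.univ
          + ∑ i : Fin S,
              (C * gC c (w i) x * F (w i) *
                  ∏ j ∈ Finset.univ.erase i, gC c (w i) (w j)) •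
                (op x * opProd op w (Finset.univ.erase i)))
    {p : ℕ} (w : Fin p → ℂ) (hw : Generic c w) (a : Fin p) (T : Finset (Fin p))
    (ha : a ∉ T) (hT : T.card = S) :
    op (w a) * opProd op w T
      = (C * F (w a) * ∏ i ∈ T, gC c (w a) (w i)) • opProd op w T
        + ∑ i ∈ T, (C * gC c (w i) (w a) * F (w i) * ∏ j ∈ T.erase i, gC c (w i) (w j)) •
            opProd op w (insert a (T.erase i)) := by
  let e : Fin S ↪ Fin p := (T.orderEmbOfFin hT).toEmbedding
  have hmem : ∀ i, e i ∈ T := fun i => T.orderEmbOfFin_mem hT i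
  have he : Finset.univ.map e = T := by
    apply Finset.eq_of_subset_of_card_le
    · intro x hx
      obtain ⟨i, -, rfl⟩ := Finset.mem_map.1 hx
      exact hmem i
    · simp [hT]
  have hg : Generic c (Fin.cons (w a) (fun i => w (e i)) : Fin (S + 1) → ℂ) := by
    have : (Fin.cons (w a) (fun i => w (e i)) : Fin (S + 1) → ℂ)
        = fun i => w ((Fin.cons a (fun i => e i) : Fin (S + 1) → Fin p) i) := by
      funext i
      refine Fin.cases ?_ (fun i => ?_) i <;> simp
    rw [this]
    intro i j hij
    apply hw
    have hinj : Function.Injective (Fin.cons a (fun i => e i) : Fin (S + 1) → Fin p) := by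
      rw [Fin.cons_injective_iff]
      refine ⟨?_, e.injective⟩
      rintro ⟨i, hi⟩
      exact ha (hi ▸ hmem i)
    exact fun h => hij (hinj h)
  have h := hSingle (w a) (fun i => w (e i)) hg
  rw [opProd_map op hcomm w e, he] at h
  rw [h]
  conv_rhs => rw [← he]
  rw [Finset.prod_map, Finset.sum_map, he]
  refine congrArg₂ (· + ·) rfl ?_
  conv_rhs => rw [← he]
  refine Finset.sum_congr rfl fun i _ => ?_
  rw [← Finset.map_erase, Finset.prod_map, opProd_insert op hcomm, opProd_map op hcomm w e]
  rw [Finset.mem_map]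
  rintro ⟨j, -, hj⟩
  exact ha (hj ▸ hmem j)

lemma multi_set (c : ℂ) (hc : c ≠ 0) (op : ℂ → Module.End ℂ V)
    (hcomm : ∀ x y, op x * op y = op y * op x) (S : ℕ) (F : ℂ → ℂ) (C : ℂ)
    {p : ℕ} (w : Fin p → ℂ) (hw : Generic c w)
    (hS : ∀ (a : Fin p) (T : Finset (Fin p)), a ∉ T → T.card = S →
      op (w a) * opProd op w T
      = (C * F (w a) * ∏ i ∈ T, gC c (w a) (w i)) • opProd op w T
        + ∑ i ∈ T, (C * gC c (w i) (w a) * F (w i) * ∏ j ∈ T.erase i, gC c (w i) (w j)) •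
            opProd op w (insert a (T.erase i)))
    (k : ℕ) : ∀ W : Finset (Fin p), W.card = S + k →
    opProd op w W = C ^ k • ∑ s ∈ Finset.powersetCard k W,
      ((∏ i ∈ s, F (w i)) * ∏ i ∈ s, ∏ j ∈ W \ s, gC c (w i) (w j)) • opProd op w (W \ s) := by
  induction k with
  | zero => intro W _; simp
  | succ k ih =>
    intro W hW
    obtain ⟨a, ha⟩ : W.Nonempty := Finset.card_pos.1 (by omega)
    obtain ⟨W, haW, rfl⟩ : ∃ W', a ∉ W' ∧ insert a W' = W :=
      ⟨W.erase a, by simp, Finset.insert_erase ha⟩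
    rw [Finset.card_insert_of_notMem haW] at hW
    have hW' : W.card = S + k := by omega
    have hne : ∀ i j, i ≠ j → w i ≠ w j := fun i j h => sub_ne_zero.1 (hw i j h).1
    rw [opProd_insert op hcomm _ _ _ haW, ih W hW', mul_smul_comm, Finset.mul_sum, pow_succ,
      mul_smul]
    congr 1
    rw [Finset.powersetCard_succ_insert haW, Finset.sum_union, Finset.sum_image, smul_add]
    rotate_left
    · intro s hs t ht hst
      have hs' : a ∉ s := fun h => haW ((Finset.mem_powersetCard.1 hs).1 h)
      have ht' : a ∉ t := fun h => haW ((Finset.mem_powersetCard.1 ht).1 h)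
      rw [← Finset.erase_insert hs', ← Finset.erase_insert ht']
      exact congrArg (fun s => Finset.erase s a) hst
    · rw [Finset.disjoint_left]
      intro s hs hs2
      obtain ⟨t, -, rfl⟩ := Finset.mem_image.1 hs2
      exact haW ((Finset.mem_powersetCard.1 hs).1 (Finset.mem_insert_self _ _))
    have key : ∀ s ∈ Finset.powersetCard k W,
        op (w a) * (((∏ i ∈ s, F (w i)) * ∏ i ∈ s, ∏ j ∈ W \ s, gC c (w i) (w j)) •
          opProd op w (W \ s))
        = (∑ i ∈ W \ s, C • (((∏ i ∈ s, F (w i)) * ∏ i ∈ s, ∏ j ∈ W \ s, gC c (w i) (w j)) *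
            (gC c (w i) (w a) * F (w i) * ∏ j ∈ (W \ s).erase i, gC c (w i) (w j))) •
            opProd op w (insert a ((W \ s).erase i)))
          + C • ((∏ i ∈ insert a s, F (w i)) *
            ∏ i ∈ insert a s, ∏ j ∈ insert a W \ insert a s, gC c (w i) (w j)) •
            opProd op w (insert a W \ insert a s) := by
      intro s hs
      obtain ⟨hsW, hsk⟩ := Finset.mem_powersetCard.1 hs
      have has : a ∉ s := fun h => haW (hsW h)
      have hd : insert a W \ insert a s = W \ s := by
        ext x
        simp only [Finset.mem_sdiff, Finset.mem_insert]
        constructor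
        · tauto
        · rintro ⟨h1, h2⟩
          refine ⟨Or.inr h1, ?_⟩
          rintro (rfl | h)
          · exact haW h1
          · exact h2 h
      rw [hd, mul_smul_comm, hS a (W \ s) (by simp [haW])
        (by rw [Finset.card_sdiff_of_subset hsW]; omega), add_comm, smul_add,
        Finset.smul_sum, Finset.prod_insert has, Finset.prod_insert has]
      congr 1
      · refine Finset.sum_congr rfl fun i _ => ?_
        rw [smul_smul, smul_smul]
        congr 1
        ring
      · rw [smul_smul, smul_smul]
        congr 1
        ring
    rw [Finset.sum_congr rfl key, Finset.sum_add_distrib, Finset.smul_sum, Finset.smul_sum]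
    congr 1
    have step : ∀ s ∈ Finset.powersetCard (k + 1) W,
        C • ((∏ i ∈ s, F (w i)) * ∏ i ∈ s, ∏ j ∈ insert a W \ s, gC c (w i) (w j)) •
          opProd op w (insert a W \ s)
        = ∑ i ∈ s, C • ((∏ i ∈ s, F (w i)) * (∏ i ∈ s, ∏ j ∈ W \ s, gC c (w i) (w j)) *
            (gC c (w i) (w a) * ∏ j ∈ s.erase i, gC c (w j) (w i))) •
            opProd op w (insert a (W \ s)) := by
      intro s hs
      obtain ⟨hsW, hsk⟩ := Finset.mem_powersetCard.1 hs
      have has : a ∉ s := fun h => haW (hsW h)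
      rw [← Finset.smul_sum, ← Finset.sum_smul, ← Finset.mul_sum,
        lagrange_gC c hc w s (Finset.card_pos.1 (by omega)) (w a)
          (fun i _ j _ h => hne i j h) (fun i hi => hne i a (fun h => has (h ▸ hi))),
        Finset.insert_sdiff_of_notMem _ has]
      refine congrArg (fun z : ℂ => C • z • opProd op w (insert a (W \ s))) ?_
      rw [mul_assoc]
      refine congrArg (fun z : ℂ => (∏ i ∈ s, F (w i)) * z) ?_
      rw [← Finset.prod_mul_distrib]
      refine Finset.prod_congr rfl fun i _ => ?_
      rw [Finset.prod_insert (by simp [haW]), mul_comm]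
    rw [Finset.sum_congr rfl step, Finset.sum_sigma', Finset.sum_sigma']
    refine Finset.sum_bij' (fun x _ => ⟨insert x.2 x.1, x.2⟩) (fun x _ => ⟨x.1.erase x.2, x.2⟩)
      ?_ ?_ ?_ ?_ ?_
    · rintro ⟨s, i⟩ h
      simp only [Finset.mem_sigma, Finset.mem_powersetCard, Finset.mem_sdiff] at h ⊢
      obtain ⟨⟨h1, h2⟩, h3, h4⟩ := h
      exact ⟨⟨Finset.insert_subset h3 h1, by rw [Finset.card_insert_of_notMem h4, h2]⟩,
        Finset.mem_insert_self _ _⟩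
    · rintro ⟨s, i⟩ h
      simp only [Finset.mem_sigma, Finset.mem_powersetCard, Finset.mem_sdiff] at h ⊢
      obtain ⟨⟨h1, h2⟩, h3⟩ := h
      exact ⟨⟨(Finset.erase_subset _ _).trans h1, by rw [Finset.card_erase_of_mem h3, h2]; rfl⟩,
        h1 h3, Finset.notMem_erase _ _⟩
    · rintro ⟨s, i⟩ h
      simp only [Finset.mem_sigma, Finset.mem_sdiff] at h
      simp [Finset.erase_insert h.2.2]
    · rintro ⟨s, i⟩ h
      simp only [Finset.mem_sigma] at h
      simp [Finset.insert_erase h.2]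
    · rintro ⟨s, i⟩ h
      simp only [Finset.mem_sigma, Finset.mem_powersetCard, Finset.mem_sdiff] at h
      obtain ⟨⟨h1, h2⟩, h3, h4⟩ := h
      have hR : (W \ s).erase i = W \ insert i s := by
        ext x
        simp only [Finset.mem_erase, Finset.mem_sdiff, Finset.mem_insert]
        tauto
      have hR2 : W \ s = insert i (W \ insert i s) := by
        rw [← hR, Finset.insert_erase (by simp [h3, h4])]
      have hiR : i ∉ W \ insert i s := by simp
      simp only []
      rw [hR]
      congr 2
      rw [hR2, Finset.erase_insert h4, Finset.prod_insert h4, Finset.prod_insert h4]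
      simp_rw [Finset.prod_insert hiR]
      rw [Finset.prod_mul_distrib]
      ring

end Helpers

/-- Reduction of the multiple action of `ν₁₂` operators on the vacuum:
if the single-operator reduction identity holds, then the action of `p ≥ S`
operators `ν₁₂` on `|0⟩` reduces to a sum over partitions with `#w̄_II = S`. -/
theorem stmt5
    (c : ℂ) (hc : c ≠ 0) (β1 β2 : ℂ) (hβ1 : β1 ≠ 0) (hβ2 : β2 ≠ 0)
    (V : Type*) [AddCommGroup V] [Module ℂ V]
    (N : Fin 2 → Fin 2 → ℂ → Module.End ℂ V)
    (vac : V) (lam1 lam2 : ℂ → ℂ)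
    (hYang : ∀ (i j k l : Fin 2) (x y : ℂ), x ≠ y →
      N i j x * N k l y - N k l y * N i j x
        = gC c x y • (N k j y * N i l x - N k j x * N i l y))
    (hCommSame : ∀ (i j : Fin 2) (x y : ℂ), N i j x * N i j y = N i j y * N i j x)
    (hvac11 : ∀ x : ℂ, N 0 0 x vac = lam1 x • vac + β2 • (N 0 1 x vac))
    (hvac22 : ∀ x : ℂ, N 1 1 x vac = lam2 x • vac + β1 • (N 0 1 x vac))
    (hvac21 : ∀ x : ℂ, N 1 0 x vac
      = (β1 * lam1 x + β2 * lam2 x) • vac + (β1 * β2) • (N 0 1 x vac))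
    (μ : ℂ) (S : ℕ) (F : ℂ → ℂ) (C : ℂ)
    (hCdef : C = (μ - 1) * (β1 + β2) / (β1 * β2))
    (hSingle : ∀ (x : ℂ) (w : Fin S → ℂ), Generic c (Fin.cons x w) →
      N 0 1 x * opProd (N 0 1) w Finset.univ
        = (C * F x * ∏ i, gC c x (w i)) • opProd (N 0 1) w Finset.univ
          + ∑ i : Fin S,
              (C * gC c (w i) x * F (w i) *
                  ∏ j ∈ Finset.univ.erase i, gC c (w i) (w j)) •
                (N 0 1 x * opProd (N 0 1) w (Finset.univ.erase i))) :
    (∀ (p : ℕ), S ≤ p → ∀ (w : Fin p → ℂ), Generic c w →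
        opProd (N 0 1) w Finset.univ vac
          = C ^ (p - S) •
              ∑ s ∈ Finset.powersetCard (p - S) (Finset.univ : Finset (Fin p)),
                ((∏ i ∈ s, F (w i)) * ∏ i ∈ s, ∏ j ∈ sᶜ, gC c (w i) (w j)) •
                  (opProd (N 0 1) w sᶜ vac))
      ∧ (∀ (n m : ℕ), S ≤ n + m → ∀ (u : Fin n → ℂ) (v : Fin m → ℂ),
          Generic c (Fin.append u v) →
          (opProd (N 0 1) u Finset.univ * opProd (N 0 1) v Finset.univ) vac
            = C ^ (n + m - S) •
                ∑ s ∈ Finset.powersetCard (n + m - S)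
                    (Finset.univ : Finset (Fin (n + m))),
                  ((∏ i ∈ s, F (Fin.append u v i)) *
                      ∏ i ∈ s, ∏ j ∈ sᶜ, gC c (Fin.append u v i) (Fin.append u v j)) •
                    (opProd (N 0 1) (Fin.append u v) sᶜ vac)) := by
  have hcomm : ∀ x y, N 0 1 x * N 0 1 y = N 0 1 y * N 0 1 x := hCommSame 0 1
  have main : ∀ (p : ℕ), S ≤ p → ∀ (w : Fin p → ℂ), Generic c w →
        opProd (N 0 1) w Finset.univ vac
          = C ^ (p - S) •
              ∑ s ∈ Finset.powersetCard (p - S) (Finset.univ : Finset (Fin p)),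
                ((∏ i ∈ s, F (w i)) * ∏ i ∈ s, ∏ j ∈ sᶜ, gC c (w i) (w j)) •
                  (opProd (N 0 1) w sᶜ vac) := by
    intro p hp w hw
    have h := multi_set c hc (N 0 1) hcomm S F C w hw
      (fun a T ha hT => single_set c (N 0 1) hcomm S F C hSingle w hw a T ha hT)
      (p - S) Finset.univ (by rw [Finset.card_univ, Fintype.card_fin]; omega)
    have h' := congrArg (fun f : Module.End ℂ V => f vac) h
    simp only [LinearMap.smul_apply, LinearMap.sum_apply, ← Finset.compl_eq_univ_sdiff] at h'
    exact h'
  refine ⟨main, ?_⟩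
  intro n m hnm u v hg
  rw [← main (n + m) hnm _ hg]
  have hu : opProd (N 0 1) u Finset.univ
      = opProd (N 0 1) (Fin.append u v) (Finset.univ.map (Fin.castAddEmb m)) := by
    rw [← opProd_map (N 0 1) hcomm]
    simp
  have hv : opProd (N 0 1) v Finset.univ
      = opProd (N 0 1) (Fin.append u v) (Finset.univ.map (Fin.natAddEmb n)) := by
    rw [← opProd_map (N 0 1) hcomm]
    simp
  rw [hu, hv, ← opProd_union (N 0 1) hcomm]
  · congr 2
    ext x
    refine Fin.addCases (fun i => ?_) (fun i => ?_) x <;> simp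
  · rw [Finset.disjoint_left]
    intro x hx hy
    obtain ⟨i, -, rfl⟩ := Finset.mem_map.1 hx
    obtain ⟨j, -, hj⟩ := Finset.mem_map.1 hy
    have := congrArg Fin.val hj
    simp at this
    omega
end
end

section
/- For all n, m ≥ 0 and generic tuples ū=(u_1,…,u_n), v̄=(v_1,…,v_m), the scalar product of modified Bethe vectors satisfies S_ν^{n,m}(ū, v̄) := ⟨0|( ν_{21}(ū) ν_{12}(v̄) |0⟩ ) = Σ_{ξ̄ ⇒ {ξ̄_I, ξ̄_II}} (−β_1)^{n−l_I}(−β_2)^{n−l_II} λ_2(ξ̄_I)·λ_1(ξ̄_II)·f(ξ̄_I, ξ̄_II)·K^{(μ)}_{n,l_I}(ū | ξ̄_I + c)·\bar{K}^{(μ)}_{n,l_II}(ū | ξ̄_II − c), where ξ̄ = {ū, v̄}, the sum runs over all partitions of ξ̄ into two disjoint subtuples with no restriction on cardinalities, l_I = #ξ̄_I, and l_II = #ξ̄_II. -/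
open scoped BigOperators

noncomputable section

/-! ### Scalar identities -/

def Good (c : ℂ) {ι : Type*} (x : ι → ℂ) : Prop :=
  (∀ i j, i ≠ j → x i - x j ≠ 0) ∧ (∀ i j, x i - x j + c ≠ 0)

lemma Good.neg {c : ℂ} {ι : Type*} {x : ι → ℂ} (h : Good c x) : Good (-c) x := by
  refine ⟨h.1, fun i j hh => h.2 j i ?_⟩
  linear_combination -hh

lemma fC_neg (c u v : ℂ) : fC (-c) u v = fC c v u := by
  unfold fC
  rw [← neg_div_neg_eq]
  congr 1 <;> ring

lemma gC_neg (c u v : ℂ) : gC (-c) u v = gC c v u := by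
  unfold gC
  rw [← neg_div_neg_eq]
  congr 1 <;> ring

lemma hC_neg (c u v : ℂ) : hC (-c) u v = hC c v u := by
  unfold hC
  rw [← neg_div_neg_eq]
  congr 1 <;> ring

section scal
variable {ι : Type*} [DecidableEq ι]

def FF (c : ℂ) (x : ι → ℂ) (X : Finset ι) (j : ι) : ℂ := ∏ k ∈ X.erase j, fC c (x j) (x k)

def ff (c : ℂ) (x : ι → ℂ) (S T : Finset ι) : ℂ := ∏ i ∈ S, ∏ j ∈ T, fC c (x i) (x j)

def ZZ (c : ℂ) (x : ι → ℂ) (X : Finset ι) (Φ Ψ : Finset ι → ℂ) : ℂ :=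
  ∑ I ∈ X.powerset, Φ I * Ψ (X \ I) * ff c x I (X \ I)

lemma FF_insert (c : ℂ) (x : ι → ℂ) {X : Finset ι} {j b : ι} (hb : b ∉ X) (hj : j ∈ X) :
    FF c x (insert b X) j = fC c (x j) (x b) * FF c x X j := by
  unfold FF
  have : b ≠ j := by rintro rfl; exact hb hj
  rw [Finset.erase_insert_of_ne this, Finset.prod_insert]
  simp [hb]

lemma FF_insert_self (c : ℂ) (x : ι → ℂ) {X : Finset ι} {b : ι} (hb : b ∉ X) :
    FF c x (insert b X) b = ∏ k ∈ X, fC c (x b) (x k) := by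
  unfold FF
  rw [Finset.erase_insert hb]

lemma ZZ_neg (c : ℂ) (x : ι → ℂ) (X : Finset ι) (Φ Ψ : Finset ι → ℂ) :
    ZZ c x X Φ Ψ = ZZ (-c) x X Ψ Φ := by
  unfold ZZ
  refine Finset.sum_bij' (fun I _ => X \ I) (fun I _ => X \ I) ?_ ?_ ?_ ?_ ?_
  · intro I hI; simp
  · intro I hI; simp
  · intro I hI; simp at hI; simp [hI]
  · intro I hI; simp at hI; simp [hI]
  · intro I hI
    simp only [Finset.mem_powerset] at hI
    rw [Finset.sdiff_sdiff_eq_self hI, mul_comm (Φ I)]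
    congr 1
    unfold ff
    rw [Finset.prod_comm]
    simp only [fC_neg]

lemma ZZ_lower (c : ℂ) (x : ι → ℂ) (X : Finset ι) (Φ Ψ : Finset ι → ℂ) (q : ι → ℂ) :
    ∑ j ∈ X, q j * FF c x X j * ZZ c x (X.erase j) Φ Ψ
      = ZZ c x X (fun I => ∑ j ∈ I, q j * FF c x I j * Φ (I.erase j)) Ψ := by
  unfold ZZ
  simp only [Finset.mul_sum, Finset.sum_mul]
  rw [Finset.sum_sigma', Finset.sum_sigma']
  refine Finset.sum_bij' (fun p _ => ⟨insert p.1 p.2, p.1⟩) (fun p _ => ⟨p.2, p.1.erase p.2⟩)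
    ?_ ?_ ?_ ?_ ?_
  · rintro ⟨j, I⟩ h
    simp only [Finset.mem_sigma, Finset.mem_powerset, Finset.subset_erase] at h ⊢
    exact ⟨Finset.insert_subset h.1 h.2.1, Finset.mem_insert_self _ _⟩
  · rintro ⟨I, j⟩ h
    simp only [Finset.mem_sigma, Finset.mem_powerset] at h ⊢
    exact ⟨h.1 h.2, Finset.erase_subset_erase _ h.1⟩
  · rintro ⟨j, I⟩ h
    simp only [Finset.mem_sigma, Finset.mem_powerset, Finset.subset_erase] at h ⊢
    simp [Finset.erase_insert h.2.2]
  · rintro ⟨I, j⟩ h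
    simp only [Finset.mem_sigma, Finset.mem_powerset] at h ⊢
    simp [Finset.insert_erase h.2]
  · rintro ⟨j, I⟩ h
    simp only [Finset.mem_sigma, Finset.mem_powerset, Finset.subset_erase] at h ⊢
    obtain ⟨hj, hI, hjI⟩ := h
    have e1 : X.erase j \ I = X \ insert j I := by
      ext k; simp only [Finset.mem_sdiff, Finset.mem_erase, Finset.mem_insert]; tauto
    rw [e1, Finset.erase_insert hjI]
    have e2 : FF c x X j = FF c x (insert j I) j * ∏ k ∈ X \ insert j I, fC c (x j) (x k) := by
      rw [FF_insert_self c x hjI]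
      unfold FF
      rw [← Finset.prod_union]
      · congr 1
        ext k
        simp only [Finset.mem_union, Finset.mem_sdiff, Finset.mem_erase, Finset.mem_insert]
        by_cases hk : k ∈ I
        · have := hI hk
          have : k ≠ j := by rintro rfl; exact hjI hk
          tauto
        · tauto
      · rw [Finset.disjoint_left]; intro k hk hk'
        simp only [Finset.mem_sdiff, Finset.mem_insert] at hk'
        tauto
    have e3 : ff c x (insert j I) (X \ insert j I)
        = (∏ k ∈ X \ insert j I, fC c (x j) (x k)) * ff c x I (X \ insert j I) := by
      unfold ff
      rw [Finset.prod_insert hjI]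
    rw [e2, e3]
    ring

/-- Partial fractions. -/
lemma pfrac (c : ℂ) (x : ι → ℂ) (hx : ∀ i j, i ≠ j → x i - x j ≠ 0) (X : Finset ι) :
    ∀ y : ℂ, (∀ j ∈ X, x j - y ≠ 0) →
    ∏ j ∈ X, (x j - y - c) / (x j - y) = 1 - ∑ j ∈ X, c / (x j - y) * FF c x X j := by
  induction X using Finset.induction_on with
  | empty => intro y _; simp
  | insert b S hb ih =>
    intro y hy
    have hb0 : x b - y ≠ 0 := hy b (Finset.mem_insert_self _ _)
    have hS : ∀ j ∈ S, x j - y ≠ 0 := fun j hj => hy j (Finset.mem_insert_of_mem hj)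
    have hne : ∀ j ∈ S, x j - x b ≠ 0 := fun j hj => hx j b (by rintro rfl; exact hb hj)
    rw [Finset.prod_insert hb, Finset.sum_insert hb, FF_insert_self c x hb, ih y hS]
    have h1 : ∏ k ∈ S, fC c (x b) (x k) = 1 - ∑ j ∈ S, c / (x j - x b) * FF c x S j := by
      rw [← ih (x b) hne]
      refine Finset.prod_congr rfl fun k hk => ?_
      unfold fC
      rw [← neg_div_neg_eq]
      congr 1 <;> ring
    rw [h1]
    have h2 : ∑ j ∈ S, c / (x j - y) * FF c x (insert b S) j
        = ∑ j ∈ S, c / (x j - y) * FF c x S j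
          + (c / (x b - y)) * ∑ j ∈ S, c / (x j - x b) * FF c x S j
          - (c / (x b - y)) * ∑ j ∈ S, c / (x j - y) * FF c x S j := by
      rw [Finset.mul_sum, Finset.mul_sum, ← Finset.sum_add_distrib, ← Finset.sum_sub_distrib]
      refine Finset.sum_congr rfl fun j hj => ?_
      rw [FF_insert c x hb hj]
      have := hS j hj
      have := hne j hj
      unfold fC
      field_simp
      ring
    rw [h2]
    field_simp
    ring

lemma sum_FF (c : ℂ) (x : ι → ℂ) (hx : ∀ i j, i ≠ j → x i - x j ≠ 0) (X : Finset ι) :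
    ∑ j ∈ X, FF c x X j = X.card := by
  induction X using Finset.induction_on with
  | empty => simp
  | insert b S hb ih =>
    have hne : ∀ j ∈ S, x j - x b ≠ 0 := fun j hj => hx j b (by rintro rfl; exact hb hj)
    rw [Finset.sum_insert hb, FF_insert_self c x hb, Finset.card_insert_of_notMem hb]
    have h1 : ∏ k ∈ S, fC c (x b) (x k) = 1 - ∑ j ∈ S, c / (x j - x b) * FF c x S j := by
      rw [← pfrac c x hx S (x b) hne]
      refine Finset.prod_congr rfl fun k hk => ?_
      unfold fC
      rw [← neg_div_neg_eq]
      congr 1 <;> ring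
    have h2 : ∑ j ∈ S, FF c x (insert b S) j
       = ∑ j ∈ S, FF c x S j + ∑ j ∈ S, c / (x j - x b) * FF c x S j := by
      rw [← Finset.sum_add_distrib]
      refine Finset.sum_congr rfl fun j hj => ?_
      rw [FF_insert c x hb hj]
      have := hne j hj
      unfold fC
      field_simp
    rw [h1, h2, ih]
    push_cast
    ring

lemma ZZ_add (c : ℂ) (x : ι → ℂ) (X : Finset ι) (Φ Φ' Ψ : Finset ι → ℂ) :
    ZZ c x X (fun I => Φ I - Φ' I) Ψ = ZZ c x X Φ Ψ - ZZ c x X Φ' Ψ := by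
  unfold ZZ
  rw [← Finset.sum_sub_distrib]
  exact Finset.sum_congr rfl fun I _ => by ring

lemma ZZ_congr (c : ℂ) (x : ι → ℂ) (X : Finset ι) {Φ Φ' Ψ Ψ' : Finset ι → ℂ}
    (h1 : ∀ I ⊆ X, Φ I = Φ' I) (h2 : ∀ I ⊆ X, Ψ I = Ψ' I) :
    ZZ c x X Φ Ψ = ZZ c x X Φ' Ψ' := by
  unfold ZZ
  refine Finset.sum_congr rfl fun I hI => ?_
  rw [h1 I (Finset.mem_powerset.1 hI), h2 _ Finset.sdiff_subset]

/-- sum form of the modified Izergin determinant -/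
def KS (c z : ℂ) (x : ι → ℂ) (w : ι → ℂ) (I : Finset ι) : ℂ :=
  ZZ c x I (fun S => ∏ j ∈ S, w j) (fun S => (-z) ^ S.card)

lemma ZZ_binom (c y : ℂ) (x : ι → ℂ) (hx : ∀ i j, i ≠ j → x i - x j ≠ 0) :
    ∀ (n : ℕ) (X : Finset ι), X.card = n →
      ZZ c x X (fun _ => 1) (fun S => y ^ S.card) = (1 + y) ^ n := by
  intro n
  induction n with
  | zero =>
    intro X hX
    rw [Finset.card_eq_zero] at hX
    subst hX
    simp [ZZ, ff]
  | succ n ih =>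
    intro X hX
    have e1 := ZZ_lower c x X (fun _ => 1) (fun S => y ^ S.card) (fun _ => 1)
    have e2 := ZZ_lower (-c) x X (fun S => y ^ S.card) (fun _ => 1) (fun _ => y)
    have hE : ∀ j ∈ X, ZZ c x (X.erase j) (fun _ => 1) (fun S => y ^ S.card) = (1 + y) ^ n :=
      fun j hj => ih _ (by rw [Finset.card_erase_of_mem hj, hX]; rfl)
    have hE' : ∀ j ∈ X, ZZ (-c) x (X.erase j) (fun S => y ^ S.card) (fun _ => 1) = (1 + y) ^ n :=
      fun j hj => by rw [← ZZ_neg]; exact hE j hj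
    have l1 : ∑ j ∈ X, (1 : ℂ) * FF c x X j * ZZ c x (X.erase j) (fun _ => 1) (fun S => y ^ S.card)
        = (n + 1) * (1 + y) ^ n := by
      rw [Finset.sum_congr rfl (fun j hj => by rw [hE j hj, one_mul]), ← Finset.sum_mul,
        sum_FF c x hx, hX]
      push_cast; rfl
    have l2 : ∑ j ∈ X, y * FF (-c) x X j * ZZ (-c) x (X.erase j) (fun S => y ^ S.card) (fun _ => 1)
        = y * (n + 1) * (1 + y) ^ n := by
      rw [Finset.sum_congr rfl (fun j hj => by rw [hE' j hj]), ← Finset.sum_mul,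
        ← Finset.mul_sum, sum_FF (-c) x hx, hX]
      push_cast; rfl
    rw [l1] at e1
    rw [l2, ← ZZ_neg] at e2
    have key : (n + 1 : ℂ) * ZZ c x X (fun _ => 1) (fun S => y ^ S.card)
        = (n + 1) * (1 + y) ^ n + y * (n + 1) * (1 + y) ^ n := by
      rw [e1, e2]
      unfold ZZ
      rw [← Finset.sum_add_distrib, Finset.mul_sum]
      refine Finset.sum_congr rfl fun I hI => ?_
      rw [Finset.mem_powerset] at hI
      have s1 : ∑ j ∈ I, (1 : ℂ) * FF c x I j * 1 = I.card := by
        simp only [one_mul, mul_one]; exact sum_FF c x hx I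
      have s2 : ∑ j ∈ X \ I, y * FF (-c) x (X \ I) j * y ^ ((X \ I).erase j).card
          = (X \ I).card * y ^ (X \ I).card := by
        rw [← sum_FF (-c) x hx, Finset.sum_mul]
        refine Finset.sum_congr rfl fun j hj => ?_
        rw [← Finset.card_erase_add_one hj, pow_succ]
        ring
      beta_reduce
      rw [s1, s2]
      have : (n + 1 : ℂ) = I.card + (X \ I).card := by
        have := Finset.card_sdiff_add_card_eq_card hI
        rw [hX] at this
        exact_mod_cast (by omega : n + 1 = I.card + (X \ I).card)
      rw [this]
      ring
    have hn : (n + 1 : ℂ) ≠ 0 := by exact_mod_cast Nat.succ_ne_zero n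
    apply mul_left_cancel₀ hn
    rw [key]
    ring

lemma KS_one (c z : ℂ) (x : ι → ℂ) (hx : ∀ i j, i ≠ j → x i - x j ≠ 0) (I : Finset ι) :
    KS c z x (fun _ => 1) I = (1 - z) ^ I.card := by
  have := ZZ_binom c (-z) x hx I.card I rfl
  rw [← sub_eq_add_neg] at this
  rw [← this]
  unfold KS
  simp

/-- `1/f(x,y)` -/
def phi (c u v : ℂ) : ℂ := (u - v) / (u - v + c)

lemma KS_rec (c z : ℂ) (x : ι → ℂ) (hx : ∀ i j, i ≠ j → x i - x j ≠ 0)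
    (w : ι → ℂ) (a : ℂ) (I : Finset ι) (ha : ∀ j ∈ I, x j - a + c ≠ 0) :
    KS c z x (fun j => w j * phi c (x j) a) I
      = KS c z x w I - ∑ j ∈ I, (w j * (c / (x j - a + c))) * FF c x I j * KS c z x w (I.erase j) := by
  unfold KS
  rw [ZZ_lower, ← ZZ_add]
  refine ZZ_congr c x I ?_ (fun _ _ => rfl)
  intro S hS
  have h := pfrac c x hx S (a - c) (fun j hj => by
    have := ha j (hS hj)
    intro h'; apply this; linear_combination h')
  rw [Finset.prod_mul_distrib]
  have e : ∏ j ∈ S, phi c (x j) a = ∏ j ∈ S, (x j - (a - c) - c) / (x j - (a - c)) := by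
    refine Finset.prod_congr rfl fun j hj => ?_
    unfold phi
    congr 1 <;> ring
  rw [e, h, mul_sub, mul_one, Finset.mul_sum]
  congr 1
  refine Finset.sum_congr rfl fun j hj => ?_
  rw [← Finset.mul_prod_erase S w hj]
  have : x j - (a - c) = x j - a + c := by ring
  rw [this]
  ring

end scal

/-! ### Determinants -/

section dets

lemma det_diag_add {κ : Type*} [Fintype κ] [DecidableEq κ] (z : ℂ) (A : Matrix κ κ ℂ) :
    Matrix.det (Matrix.of fun j k : κ => z * (if j = k then 1 else 0) + A j k)
      = ∑ S : Finset κ, z ^ (Sᶜ).card *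
          Matrix.det (Matrix.of fun j k : {a // a ∈ S} => A j.1 k.1) := by
  have h := (Matrix.detRowAlternating (n := κ) (R := ℂ)).toMultilinearMap.map_add_univ
    (fun j => A j) (fun j k => z * (if j = k then 1 else 0))
  have e : (Matrix.of fun j k : κ => z * (if j = k then 1 else 0) + A j k)
      = ((fun j => A j) + (fun j k => z * (if j = k then 1 else 0)) : κ → κ → ℂ) := by
    ext j k
    simp [add_comm]
  rw [e]
  refine h.trans ?_
  refine Finset.sum_congr rfl fun S _ => ?_
  have hM : (S.piecewise (fun j => A j) (fun j k => z * (if j = k then 1 else 0)) : κ → κ → ℂ)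
      = fun j k => if j ∈ S then A j k else z * (if j = k then 1 else 0) := by
    ext j k
    by_cases hj : j ∈ S
    · rw [Finset.piecewise_eq_of_mem _ _ _ hj]; simp [hj]
    · rw [Finset.piecewise_eq_of_notMem _ _ _ hj]; simp [hj]
  rw [hM]
  have hgoal : Matrix.det (Matrix.of fun j k => if j ∈ S then A j k
      else z * (if j = k then 1 else 0)) = z ^ (Sᶜ).card *
          Matrix.det (Matrix.of fun j k : {a // a ∈ S} => A j.1 k.1) := by
    rw [Matrix.twoBlockTriangular_det _ (fun j => j ∈ S), mul_comm]
    · refine congrArg₂ (· * ·) ?_ ?_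
      · have : Matrix.toSquareBlockProp (Matrix.of fun j k => if j ∈ S then A j k
            else z * (if j = k then 1 else 0)) (fun j => ¬ j ∈ S)
            = Matrix.diagonal (fun _ => z) := by
          ext j k
          simp only [Matrix.toSquareBlockProp_def, Matrix.of_apply, Matrix.diagonal_apply]
          simp [Subtype.ext_iff, j.2]
        rw [this, Matrix.det_diagonal]
        simp [Finset.card_compl, Fintype.card_subtype_compl]
      · have h2 : Matrix.toSquareBlockProp (Matrix.of fun j k => if j ∈ S then A j k
            else z * (if j = k then 1 else 0)) (fun j => j ∈ S)
            = Matrix.of (fun j k : {a // a ∈ S} => A j.1 k.1) := by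
          ext j k
          simp only [Matrix.toSquareBlockProp_def, Matrix.of_apply]
          exact if_pos j.2
        rw [h2]
        have key : ∀ (i1 i2 : Fintype {a // a ∈ S}) (M : Matrix {a // a ∈ S} {a // a ∈ S} ℂ),
            @Matrix.det _ _ i1 _ _ M = @Matrix.det _ _ i2 _ _ M := by
          intro i1 i2 M; rw [Subsingleton.elim i1 i2]
        exact key _ _ _
    · intro i hi j hj
      have : i ≠ j := by rintro rfl; exact hi hj
      simp [this, hi]
  exact hgoal

lemma cauchy_det {κ : Type*} [DecidableEq κ] (c : ℂ) (hc : c ≠ 0) (y : κ → ℂ)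
    (hy : Good c y) (S : Finset κ) :
    (∏ j ∈ S, FF c y S j) *
      Matrix.det (Matrix.of fun j k : {a // a ∈ S} => 1 / hC c (y j.1) (y k.1)) = 1 := by
  induction S using Finset.induction_on with
  | empty => simp
  | insert b S hb ih =>
    have hne : ∀ j ∈ S, j ≠ b := fun j hj => by rintro rfl; exact hb hj
    let e : {a // a ∈ S} ⊕ PUnit.{1} ≃ {a // a ∈ insert b S} :=
      ((Finset.subtypeInsertEquivOption hb).trans (Equiv.optionEquivSumPUnit _)).symm
    have el : ∀ j, (e (Sum.inl j)).1 = j.1 := by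
      intro j; simp [e, Finset.subtypeInsertEquivOption]
    have er : ∀ j, (e (Sum.inr j)).1 = b := by
      intro j; simp [e, Finset.subtypeInsertEquivOption]
    rw [← Matrix.det_submatrix_equiv_self e]
    have hM : (Matrix.of fun j k : {a // a ∈ insert b S} => 1 / hC c (y j.1) (y k.1)).submatrix e e
        = Matrix.fromBlocks (Matrix.of fun j k : {a // a ∈ S} => 1 / hC c (y j.1) (y k.1))
          (Matrix.of fun (j : {a // a ∈ S}) (_ : PUnit.{1}) => 1 / hC c (y j.1) (y b))
          (Matrix.of fun (_ : PUnit.{1}) (k : {a // a ∈ S}) => 1 / hC c (y b) (y k.1)) 1 := by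
      ext i j
      rcases i with i | i <;> rcases j with j | j <;> simp [el, er, hC, hc]
    rw [hM, Matrix.det_fromBlocks_one₂₂]
    have hD : (Matrix.of fun j k : {a // a ∈ S} => 1 / hC c (y j.1) (y k.1))
        - (Matrix.of fun (j : {a // a ∈ S}) (_ : PUnit.{1}) => 1 / hC c (y j.1) (y b))
          * (Matrix.of fun (_ : PUnit.{1}) (k : {a // a ∈ S}) => 1 / hC c (y b) (y k.1))
        = Matrix.diagonal (fun j : {a // a ∈ S} => phi c (y j.1) (y b))
          * (Matrix.of fun j k : {a // a ∈ S} => 1 / hC c (y j.1) (y k.1))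
          * Matrix.diagonal (fun j : {a // a ∈ S} => phi c (y b) (y j.1)) := by
      ext j k
      rw [Matrix.mul_diagonal, Matrix.diagonal_mul]
      simp only [Matrix.sub_apply, Matrix.mul_apply, Matrix.of_apply, Finset.univ_unique,
        Finset.sum_singleton]
      have h1 := hy.2 j.1 k.1
      have h2 := hy.2 j.1 b
      have h3 := hy.2 b k.1
      unfold hC phi
      field_simp
      ring
    rw [hD, Matrix.det_mul, Matrix.det_mul, Matrix.det_diagonal, Matrix.det_diagonal,
      Finset.prod_insert hb, FF_insert_self c y hb]
    have p1 : ∏ j ∈ S, FF c y (insert b S) j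
        = (∏ j ∈ S, fC c (y j) (y b)) * ∏ j ∈ S, FF c y S j := by
      rw [← Finset.prod_mul_distrib]
      exact Finset.prod_congr rfl fun j hj => FF_insert c y hb hj
    rw [p1]
    rw [Finset.prod_coe_sort S (fun j => phi c (y j) (y b)),
      Finset.prod_coe_sort S (fun j => phi c (y b) (y j))]
    have q1 : (∏ j ∈ S, fC c (y j) (y b)) * ∏ j ∈ S, phi c (y j) (y b) = 1 := by
      rw [← Finset.prod_mul_distrib]
      refine Finset.prod_eq_one fun j hj => ?_
      have := hy.2 j b
      have := hy.1 j b (hne j hj)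
      unfold fC phi; field_simp
    have q2 : (∏ j ∈ S, fC c (y b) (y j)) * ∏ j ∈ S, phi c (y b) (y j) = 1 := by
      rw [← Finset.prod_mul_distrib]
      refine Finset.prod_eq_one fun j hj => ?_
      have := hy.2 b j
      have := hy.1 b j (hne j hj).symm
      unfold fC phi; field_simp
    set P1 := ∏ j ∈ S, fC c (y j) (y b)
    set P2 := ∏ j ∈ S, fC c (y b) (y j)
    set P3 := ∏ j ∈ S, phi c (y j) (y b)
    set P4 := ∏ j ∈ S, phi c (y b) (y j)
    linear_combination ih * (P1 * P3 * P2 * P4) + q1 * (P2 * P4) + q2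

lemma det_expand {κ : Type*} [Fintype κ] [DecidableEq κ] (c z : ℂ) (hc : c ≠ 0) (y w : κ → ℂ)
    (hy : Good c y) :
    Matrix.det (Matrix.of fun j k : κ => z * (if j = k then 1 else 0) +
       w j * FF c y Finset.univ j / hC c (y j) (y k))
     = ∑ S : Finset κ, (∏ j ∈ S, w j) * z ^ (Sᶜ).card * ff c y S Sᶜ := by
  rw [det_diag_add z (fun j k => w j * FF c y Finset.univ j / hC c (y j) (y k))]
  refine Finset.sum_congr rfl fun S _ => ?_
  have h1 : (Matrix.of fun j k : {a // a ∈ S} =>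
      w j.1 * FF c y Finset.univ j.1 / hC c (y j.1) (y k.1))
      = Matrix.of fun j k : {a // a ∈ S} => (w j.1 * FF c y Finset.univ j.1) *
        (Matrix.of (fun j k : {a // a ∈ S} => 1 / hC c (y j.1) (y k.1))) j k := by
    ext j k; simp [div_eq_mul_inv]
  rw [h1, Matrix.det_mul_column,
    Finset.prod_coe_sort S (fun j => w j * FF c y Finset.univ j), Finset.prod_mul_distrib]
  have h2 : ∏ j ∈ S, FF c y Finset.univ j = (∏ j ∈ S, FF c y S j) * ff c y S Sᶜ := by
    unfold ff
    rw [← Finset.prod_mul_distrib]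
    refine Finset.prod_congr rfl fun j hj => ?_
    unfold FF
    rw [← Finset.prod_union]
    · congr 1
      ext k
      simp only [Finset.mem_union, Finset.mem_erase, Finset.mem_compl, Finset.mem_univ, and_true]
      by_cases hk : k ∈ S
      · tauto
      · have : k ≠ j := by rintro rfl; exact hk hj
        tauto
    · rw [Finset.disjoint_left]; intro k hk hk'
      simp at hk hk'; tauto
  have h3 := cauchy_det c hc y hy S
  rw [h2]
  linear_combination (z ^ (Sᶜ).card * (∏ j ∈ S, w j) * ff c y S Sᶜ) * h3

lemma KIz_eq {ι ι' : Type*} [DecidableEq ι] [Fintype ι'] (c z : ℂ) (hc : c ≠ 0)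
    (x : ι → ℂ) (hx : Good c x) (x' : ι' → ℂ) (I : Finset ι) :
    KIz c z x' (fun i : {a // a ∈ I} => x i.1 + c)
      = KS c z x (fun j => ∏ i, phi c (x j) (x' i)) I := by
  have hy : Good c (fun i : {a // a ∈ I} => x i.1) :=
    ⟨fun i j hij => hx.1 i.1 j.1 (fun h => hij (Subtype.ext h)), fun i j => hx.2 _ _⟩
  have h := det_expand c (-z) hc (fun i : {a // a ∈ I} => x i.1)
    (fun i => ∏ k, phi c (x i.1) (x' k)) hy
  have e1 : KIz c z x' (fun i : {a // a ∈ I} => x i.1 + c)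
      = Matrix.det (Matrix.of fun j k : {a // a ∈ I} => -z * (if j = k then 1 else 0) +
       (∏ k, phi c (x j.1) (x' k)) * FF c (fun i : {a // a ∈ I} => x i.1) Finset.univ j
        / hC c (x j.1) (x k.1)) := by
    unfold KIz FF
    congr 1
    ext j k
    simp only [Matrix.of_apply]
    congr 1
    congr 1
    · congr 1
      · refine Finset.prod_congr rfl fun i _ => ?_
        unfold fC phi
        rw [← neg_div_neg_eq]
        congr 1 <;> ring
      · refine Finset.prod_congr rfl fun i _ => ?_
        unfold fC
        congr 1 <;> ring
    · unfold hC
      congr 1; ring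
  rw [e1, h]
  unfold KS ZZ
  refine Finset.sum_bij' (fun S _ => S.map (Function.Embedding.subtype _))
    (fun S _ => S.subtype (fun a => a ∈ I)) ?_ ?_ ?_ ?_ ?_
  · intro S _
    simp only [Finset.mem_powerset]
    exact Finset.map_subtype_subset S
  · intro S _; simp
  · intro S _
    ext a
    simp
  · intro S hS
    rw [Finset.subtype_map_of_mem]
    exact fun a ha => Finset.mem_powerset.1 hS ha
  · intro S _
    have hc' : I \ S.map (Function.Embedding.subtype _)
        = (Sᶜ).map (Function.Embedding.subtype _) := by
      ext a
      simp only [Finset.mem_sdiff, Finset.mem_map, Function.Embedding.subtype_apply,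
        Subtype.exists, exists_and_right, exists_eq_right, Finset.mem_compl]
      constructor
      · rintro ⟨h1, h2⟩
        exact ⟨h1, fun h => h2 ⟨h1, h⟩⟩
      · rintro ⟨h1, h2⟩
        exact ⟨h1, fun ⟨_, h⟩ => h2 h⟩
    rw [hc']
    unfold ff
    simp

end dets

/-! ### Actions of the operators -/

section ops
variable {ι : Type*} [DecidableEq ι]

lemma FF_ext (c : ℂ) (x : ι → ℂ) (hx : Good c x) {Y : Finset ι} {j b : ι} (hb : b ∉ Y)
    (hj : j ∈ Y) : FF c x Y j = phi c (x j) (x b) * FF c x (insert b Y) j := by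
  rw [FF_insert c x hb hj, ← mul_assoc]
  have h1 := hx.2 j b
  have h2 := hx.1 j b (by rintro rfl; exact hb hj)
  have : phi c (x j) (x b) * fC c (x j) (x b) = 1 := by
    unfold phi fC; field_simp
  rw [this, one_mul]

lemma sum_ext {W : Type*} [AddCommGroup W] [Module ℂ W] (c : ℂ) (x : ι → ℂ) (hx : Good c x)
    {Y : Finset ι} {b : ι} (hb : b ∉ Y) (q : ι → ℂ) (G : ι → W) :
    ∑ j ∈ Y, (q j * FF c x Y j) • G j
      = ∑ j ∈ insert b Y, (q j * phi c (x j) (x b) * FF c x (insert b Y) j) • G j := by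
  rw [Finset.sum_insert hb]
  have : phi c (x b) (x b) = 0 := by simp [phi]
  rw [this, mul_zero, zero_mul, zero_smul, zero_add]
  refine Finset.sum_congr rfl fun j hj => ?_
  rw [FF_ext c x hx hb hj, mul_assoc]

lemma sum_extU {W : Type*} [AddCommGroup W] [Module ℂ W] (c : ℂ) (x : ι → ℂ) (hx : Good c x)
    (U : Finset ι) : ∀ (Y : Finset ι), Disjoint U Y → ∀ (q : ι → ℂ) (G : ι → W),
    ∑ j ∈ Y, (q j * FF c x Y j) • G j
      = ∑ j ∈ U ∪ Y, (q j * (∏ u ∈ U, phi c (x j) (x u)) * FF c x (U ∪ Y) j) • G j := by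
  induction U using Finset.induction_on with
  | empty => intro Y _ q G; simp
  | insert b U hb ih =>
    intro Y hd q G
    rw [Finset.disjoint_insert_left] at hd
    rw [ih Y hd.2]
    have hb' : b ∉ U ∪ Y := by simp [hb, hd.1]
    rw [sum_ext c x hx hb', Finset.insert_union]
    refine Finset.sum_congr rfl fun j _ => ?_
    rw [Finset.prod_insert hb]
    congr 1
    ring

variable {V : Type*} [AddCommGroup V] [Module ℂ V]

lemma lift_B (c : ℂ) (x : ι → ℂ) (hx : Good c x) (B : ℂ → Module.End ℂ V) (bv : Finset ι → V)
    (hbv : ∀ S b, b ∉ S → bv (insert b S) = B (x b) (bv S))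
    {Y : Finset ι} {b : ι} (hb : b ∉ Y) (q : ι → ℂ) :
    B (x b) (∑ i ∈ Y, (q i * FF c x Y i) • bv (Y.erase i))
      = ∑ i ∈ insert b Y, (q i * phi c (x i) (x b) * FF c x (insert b Y) i)
          • bv ((insert b Y).erase i) := by
  rw [← sum_ext c x hx hb q (fun i => bv ((insert b Y).erase i)), map_sum]
  refine Finset.sum_congr rfl fun i hi => ?_
  have hne : b ≠ i := by rintro rfl; exact hb hi
  rw [map_smul, Finset.erase_insert_of_ne hne, hbv]
  simp [hb]

lemma act_diag (c : ℂ) (x : ι → ℂ) (hx : Good c x) (B D : ℂ → Module.End ℂ V)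
    (bv : Finset ι → V) (lam : ℂ → ℂ)
    (hbv : ∀ S b, b ∉ S → bv (insert b S) = B (x b) (bv S))
    (h0 : ∀ u, D u (bv ∅) = lam u • bv ∅)
    (hc : c ≠ 0)
    (hDB : ∀ u v, u ≠ v → ∀ w, D u (B v w) = fC c u v • B v (D u w) + gC c v u • B u (D v w))
    (S : Finset ι) : ∀ a, a ∉ S →
    D (x a) (bv S) = ∑ i ∈ insert a S,
      ((lam (x i) * (c / (x i - x a + c))) * FF c x (insert a S) i) • bv ((insert a S).erase i) := by
  induction S using Finset.induction_on with
  | empty =>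
    intro a _
    simp [h0, FF, hc]
  | insert b S hb ih =>
    intro a ha
    rw [Finset.mem_insert, not_or] at ha
    obtain ⟨hab, haS⟩ := ha
    have hxab := hx.1 a b hab
    rw [hbv S b hb, hDB _ _ (sub_ne_zero.1 hxab), ih a haS, ih b hb]
    have hb' : b ∉ insert a S := by simp [hb, Ne.symm hab]
    have ha' : a ∉ insert b S := by simp [haS, hab]
    rw [lift_B c x hx B bv hbv hb', lift_B c x hx B bv hbv ha', Finset.insert_comm b a S,
      Finset.smul_sum, Finset.smul_sum, ← Finset.sum_add_distrib]
    refine Finset.sum_congr rfl fun i _ => ?_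
    rw [smul_smul, smul_smul, ← add_smul]
    congr 1
    have h1 := hx.2 i a
    have h2 := hx.2 i b
    have key : fC c (x a) (x b) * (phi c (x i) (x b) * (c / (x i - x a + c)))
        + gC c (x b) (x a) * (phi c (x i) (x a) * (c / (x i - x b + c))) = c / (x i - x a + c) := by
      have h3 : x b - x a ≠ 0 := by intro h; apply hxab; linear_combination -h
      have h4 : gC c (x b) (x a) = - (c / (x a - x b)) := by
        unfold gC; rw [← neg_div_neg_eq, ← neg_div]; congr 1; ring
      rw [h4]
      unfold fC phi
      field_simp
      ring
    linear_combination (lam (x i) * FF c x (insert a (insert b S)) i) * key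

lemma act_C (c : ℂ) (x : ι → ℂ) (hx : Good c x) (A B C D : ℂ → Module.End ℂ V)
    (bv : Finset ι → V) (lam1 lam2 : ℂ → ℂ)
    (hbv : ∀ S b, b ∉ S → bv (insert b S) = B (x b) (bv S))
    (h1 : ∀ u, A u (bv ∅) = lam1 u • bv ∅)
    (h2 : ∀ u, D u (bv ∅) = lam2 u • bv ∅)
    (h3 : ∀ u, C u (bv ∅) = 0)
    (hc : c ≠ 0)
    (hAB : ∀ u v, u ≠ v → ∀ w, A u (B v w) = fC c v u • B v (A u w) + gC c u v • B u (A v w))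
    (hDB : ∀ u v, u ≠ v → ∀ w, D u (B v w) = fC c u v • B v (D u w) + gC c v u • B u (D v w))
    (hCB : ∀ u v, u ≠ v → ∀ w, C u (B v w) = B v (C u w) + gC c u v • (A v (D u w) - A u (D v w)))
    (S : Finset ι) : ∀ a, a ∉ S →
    C (x a) (bv S) = ∑ j ∈ insert a S,
      ((lam2 (x j) * (c / (x j - x a + c))) * FF c x (insert a S) j) •
      ∑ i ∈ (insert a S).erase j,
        ((lam1 (x i) * (-c / (x i - x a + -c))) * FF (-c) x ((insert a S).erase j) i) •
        bv (((insert a S).erase j).erase i) := by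
  have hAB' : ∀ u v, u ≠ v → ∀ w,
      A u (B v w) = fC (-c) u v • B v (A u w) + gC (-c) v u • B u (A v w) := by
    intro u v h w
    rw [fC_neg, gC_neg]; exact hAB u v h w
  have actA := act_diag (-c) x hx.neg B A bv lam1 hbv h1 (neg_ne_zero.2 hc) hAB'
  have actD := act_diag c x hx B D bv lam2 hbv h2 hc hDB
  have hAD : ∀ (S : Finset ι) (a b : ι), a ∉ S → b ∉ S → a ≠ b →
      A (x b) (D (x a) (bv S)) = ∑ j ∈ insert b (insert a S),
        ((lam2 (x j) * (c / (x j - x a + c))) * phi c (x j) (x b)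
          * FF c x (insert b (insert a S)) j) •
        ∑ i ∈ (insert b (insert a S)).erase j,
          ((lam1 (x i) * (-c / (x i - x b + -c))) * FF (-c) x ((insert b (insert a S)).erase j) i) •
          bv (((insert b (insert a S)).erase j).erase i) := by
    intro S a b ha hb hab
    have hb' : b ∉ insert a S := by simp [hb, Ne.symm hab]
    rw [actD S a ha, map_sum, ← sum_ext c x hx hb' (fun j => lam2 (x j) * (c / (x j - x a + c)))]
    refine Finset.sum_congr rfl fun j hj => ?_
    have hne : b ≠ j := by rintro rfl; exact hb' hj
    rw [map_smul, actA _ b (by simp [hb', -Finset.mem_insert]), Finset.erase_insert_of_ne hne]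
  induction S using Finset.induction_on with
  | empty =>
    intro a _
    simp [h3]
  | insert b S hb ih =>
    intro a ha
    rw [Finset.mem_insert, not_or] at ha
    obtain ⟨hab, haS⟩ := ha
    have hxab := hx.1 a b hab
    have hb' : b ∉ insert a S := by simp [hb, Ne.symm hab]
    rw [hbv S b hb, hCB _ _ (sub_ne_zero.1 hxab), ih a haS, hAD S a b haS hb hab,
      hAD S b a hb haS (Ne.symm hab)]
    rw [Finset.insert_comm b a S]
    set X := insert a (insert b S) with hX
    have hX' : X = insert b (insert a S) := Finset.insert_comm a b S
    have first : B (x b) (∑ j ∈ insert a S,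
      ((lam2 (x j) * (c / (x j - x a + c))) * FF c x (insert a S) j) •
      ∑ i ∈ (insert a S).erase j,
        ((lam1 (x i) * (-c / (x i - x a + -c))) * FF (-c) x ((insert a S).erase j) i) •
        bv (((insert a S).erase j).erase i))
        = ∑ j ∈ X, ((lam2 (x j) * (c / (x j - x a + c))) * phi c (x j) (x b) * FF c x X j) •
          ∑ i ∈ X.erase j,
           ((lam1 (x i) * (-c / (x i - x a + -c))) * phi (-c) (x i) (x b) * FF (-c) x (X.erase j) i)
            • bv ((X.erase j).erase i) := by
      rw [hX', map_sum, ← sum_ext c x hx hb' (fun j => lam2 (x j) * (c / (x j - x a + c)))]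
      refine Finset.sum_congr rfl fun j hj => ?_
      have hne : b ≠ j := by rintro rfl; exact hb' hj
      rw [map_smul, lift_B (-c) x hx.neg B bv hbv (by simp [hb', -Finset.mem_insert]),
        Finset.erase_insert_of_ne hne]
    rw [first, ← Finset.sum_sub_distrib, Finset.smul_sum, ← Finset.sum_add_distrib]
    refine Finset.sum_congr rfl fun j _ => ?_
    rw [Finset.smul_sum, Finset.smul_sum, Finset.smul_sum, Finset.smul_sum,
      ← Finset.sum_sub_distrib, Finset.smul_sum, ← Finset.sum_add_distrib]
    refine Finset.sum_congr rfl fun i _ => ?_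
    rw [smul_smul, smul_smul, smul_smul, smul_smul, ← sub_smul, smul_smul, ← add_smul]
    congr 1
    have k1 := hx.2 j a
    have k2 := hx.2 j b
    have k3 := hx.neg.2 i a
    have k4 := hx.neg.2 i b
    have key : phi c (x j) (x b) * phi (-c) (x i) (x b) * (-c / (x i - x a + -c))
          * (c / (x j - x a + c))
        + gC c (x a) (x b) * (phi c (x j) (x b) * (c / (x j - x a + c)) * (-c / (x i - x b + -c))
          - phi c (x j) (x a) * (c / (x j - x b + c)) * (-c / (x i - x a + -c)))
        = (-c / (x i - x a + -c)) * (c / (x j - x a + c)) := by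
      unfold gC phi
      field_simp
      ring
    linear_combination (lam2 (x j) * FF c x X j * lam1 (x i) * FF (-c) x (X.erase j) i) * key

end ops

/-! ### The induction -/

section main
variable {ι : Type*} [DecidableEq ι]

def Phi (c β z : ℂ) (lam : ℂ → ℂ) (x : ι → ℂ) (U I : Finset ι) : ℂ :=
  (-β) ^ ((U.card : ℤ) - (I.card : ℤ)) * (∏ i ∈ I, lam (x i)) *
    KS c z x (fun j => ∏ u ∈ U, phi c (x j) (x u)) I

lemma Phi_rec (c β z : ℂ) (hβ : β ≠ 0) (lam : ℂ → ℂ) (x : ι → ℂ) (hx : Good c x)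
    (U : Finset ι) (a : ι) (ha : a ∉ U) (I : Finset ι) :
    β * Phi c β z lam x U I + ∑ j ∈ I, (lam (x j) * (c / (x j - x a + c)) *
        (∏ u ∈ U, phi c (x j) (x u))) * FF c x I j * Phi c β z lam x U (I.erase j)
      = - Phi c β z lam x (insert a U) I := by
  have hβ' : -β ≠ 0 := neg_ne_zero.2 hβ
  unfold Phi
  have e : (fun j => ∏ u ∈ insert a U, phi c (x j) (x u))
      = fun j => (∏ u ∈ U, phi c (x j) (x u)) * phi c (x j) (x a) := by
    ext j; rw [Finset.prod_insert ha, mul_comm]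
  rw [e, KS_rec c z x hx.1 _ (x a) I (fun j _ => hx.2 j a), Finset.card_insert_of_notMem ha]
  have hp : (-β) ^ (((U.card + 1 : ℕ) : ℤ) - (I.card : ℤ))
      = (-β) ^ ((U.card : ℤ) - (I.card : ℤ)) * (-β) := by
    rw [← zpow_add_one₀ hβ']
    congr 1; push_cast; ring
  rw [hp, mul_sub, neg_sub, Finset.mul_sum]
  have hs : ∀ j ∈ I, (lam (x j) * (c / (x j - x a + c)) *
        (∏ u ∈ U, phi c (x j) (x u))) * FF c x I j *
        ((-β) ^ ((U.card : ℤ) - ((I.erase j).card : ℤ)) * (∏ i ∈ I.erase j, lam (x i)) *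
    KS c z x (fun j => ∏ u ∈ U, phi c (x j) (x u)) (I.erase j))
      = (-β) ^ ((U.card : ℤ) - (I.card : ℤ)) * (-β) * (∏ i ∈ I, lam (x i)) *
       ((∏ u ∈ U, phi c (x j) (x u)) * (c / (x j - x a + c)) * FF c x I j *
        KS c z x (fun j => ∏ u ∈ U, phi c (x j) (x u)) (I.erase j)) := by
    intro j hj
    rw [← zpow_add_one₀ hβ', ← Finset.mul_prod_erase I _ hj, ← Finset.card_erase_add_one hj]
    have : (U.card : ℤ) - (((I.erase j).card + 1 : ℕ) : ℤ) + 1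
      = (U.card : ℤ) - ((I.erase j).card : ℤ) := by push_cast; ring
    rw [this]
    ring
  rw [Finset.sum_congr rfl hs]
  ring

lemma ZZ_bilin (c : ℂ) (x : ι → ℂ) (X : Finset ι) (b1 b2 : ℂ) (Φ Φ' Ψ Ψ' : Finset ι → ℂ) :
    ZZ c x X Φ' Ψ' + b1 * ZZ c x X Φ Ψ' + b2 * ZZ c x X Φ' Ψ + b1 * b2 * ZZ c x X Φ Ψ
      = ZZ c x X (fun I => b1 * Φ I + Φ' I) (fun I => b2 * Ψ I + Ψ' I) := by
  unfold ZZ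
  simp only [Finset.mul_sum, ← Finset.sum_add_distrib]
  exact Finset.sum_congr rfl fun I _ => by ring

variable {V : Type*} [AddCommGroup V] [Module ℂ V]

lemma main_step (c : ℂ) (x : ι → ℂ) (hx : Good c x) (A B C D E : ℂ → Module.End ℂ V)
    (bv : Finset ι → V) (lam1 lam2 : ℂ → ℂ)
    (hbv : ∀ S b, b ∉ S → bv (insert b S) = B (x b) (bv S))
    (h1 : ∀ u, A u (bv ∅) = lam1 u • bv ∅)
    (h2 : ∀ u, D u (bv ∅) = lam2 u • bv ∅)
    (h3 : ∀ u, C u (bv ∅) = 0)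
    (hc : c ≠ 0)
    (hAB : ∀ u v, u ≠ v → ∀ w, A u (B v w) = fC c v u • B v (A u w) + gC c u v • B u (A v w))
    (hDB : ∀ u v, u ≠ v → ∀ w, D u (B v w) = fC c u v • B v (D u w) + gC c v u • B u (D v w))
    (hCB : ∀ u v, u ≠ v → ∀ w, C u (B v w) = B v (C u w) + gC c u v • (A v (D u w) - A u (D v w)))
    (β1 β2 μ : ℂ) (hβ1 : β1 ≠ 0) (hβ2 : β2 ≠ 0)
    (hE : ∀ u w, E u w = C u w + β1 • A u w + β2 • D u w + (β1 * β2) • B u w)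
    (U : Finset ι) (L : V →ₗ[ℂ] ℂ)
    (hL : ∀ S, Disjoint U S → L (bv S)
      = ZZ c x (U ∪ S) (Phi c β1 μ lam2 x U) (Phi (-c) β2 μ lam1 x U))
    (a : ι) (ha : a ∉ U) (S : Finset ι) (hS : Disjoint (insert a U) S) :
    L (E (x a) (bv S)) = ZZ c x (insert a U ∪ S) (Phi c β1 μ lam2 x (insert a U))
      (Phi (-c) β2 μ lam1 x (insert a U)) := by
  have hAB' : ∀ u v, u ≠ v → ∀ w,
      A u (B v w) = fC (-c) u v • B v (A u w) + gC (-c) v u • B u (A v w) := by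
    intro u v h w
    rw [fC_neg, gC_neg]; exact hAB u v h w
  rw [Finset.disjoint_insert_left] at hS
  obtain ⟨haS, hUS⟩ := hS
  set Y := insert a S with hY
  have hUY : Disjoint U Y := by
    rw [hY, Finset.disjoint_insert_right]; exact ⟨ha, hUS⟩
  have hX : insert a U ∪ S = U ∪ Y := by
    rw [hY, Finset.insert_union, Finset.union_insert]
  rw [hX]
  set X := U ∪ Y with hXdef
  have actA := act_diag (-c) x hx.neg B A bv lam1 hbv h1 (neg_ne_zero.2 hc) hAB' S a haS
  have actD := act_diag c x hx B D bv lam2 hbv h2 hc hDB S a haS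
  have actC := act_C c x hx A B C D bv lam1 lam2 hbv h1 h2 h3 hc hAB hDB hCB S a haS
  set Φ := Phi c β1 μ lam2 x U with hΦ
  set Ψ := Phi (-c) β2 μ lam1 x U with hΨ
  have hdis : ∀ T ⊆ Y, Disjoint U T := fun T hT => hUY.mono_right hT
  have herase : ∀ T : Finset ι, Disjoint U T → ∀ j ∈ T, U ∪ T.erase j = (U ∪ T).erase j := by
    intro T hT j hj
    have : j ∉ U := fun h => (Finset.disjoint_left.1 hT h) hj
    ext k
    simp only [Finset.mem_union, Finset.mem_erase]
    by_cases hk : k = j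
    · subst hk; simp [this]
    · simp [hk]
  -- the lowering in the A direction, for an arbitrary subset
  have lowA : ∀ T, Disjoint U T →
      ∑ i ∈ T, ((lam1 (x i) * (-c / (x i - x a + -c))) * FF (-c) x T i) • L (bv (T.erase i))
      = ZZ c x (U ∪ T) Φ (fun I => ∑ i ∈ I, (lam1 (x i) * (-c / (x i - x a + -c)) *
        (∏ u ∈ U, phi (-c) (x i) (x u))) * FF (-c) x I i * Ψ (I.erase i)) := by
    intro T hT
    have s1 : ∀ i ∈ T, L (bv (T.erase i)) = ZZ (-c) x ((U ∪ T).erase i) Ψ Φ := by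
      intro i hi
      rw [hL _ (hT.mono_right (Finset.erase_subset _ _)), herase T hT i hi, ZZ_neg]
    rw [Finset.sum_congr rfl (fun i hi => by rw [s1 i hi]),
      sum_extU (-c) x hx.neg U T hT, ZZ_neg, ← ZZ_lower]
    exact Finset.sum_congr rfl fun i _ => by rw [smul_eq_mul]
  have lowD : ∀ Ψ' : Finset ι → ℂ,
      ∑ j ∈ Y, ((lam2 (x j) * (c / (x j - x a + c))) * FF c x Y j) • ZZ c x (U ∪ Y.erase j) Φ Ψ'
      = ZZ c x X (fun I => ∑ i ∈ I, (lam2 (x i) * (c / (x i - x a + c)) *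
        (∏ u ∈ U, phi c (x i) (x u))) * FF c x I i * Φ (I.erase i)) Ψ' := by
    intro Ψ'
    rw [Finset.sum_congr rfl (fun i hi => by rw [herase Y hUY i hi]),
      sum_extU c x hx U Y hUY, ← ZZ_lower]
    exact Finset.sum_congr rfl fun i _ => by rw [smul_eq_mul]
  have eB : L (B (x a) (bv S)) = ZZ c x X Φ Ψ := by
    rw [← hbv S a haS, hL _ hUY]
  have eA : L (A (x a) (bv S)) = ZZ c x X Φ (fun I => ∑ i ∈ I, (lam1 (x i) *
        (-c / (x i - x a + -c)) *
        (∏ u ∈ U, phi (-c) (x i) (x u))) * FF (-c) x I i * Ψ (I.erase i)) := by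
    rw [actA, map_sum, ← lowA Y hUY]
    exact Finset.sum_congr rfl fun i _ => by rw [map_smul]
  have eD : L (D (x a) (bv S)) = ZZ c x X (fun I => ∑ i ∈ I, (lam2 (x i) *
        (c / (x i - x a + c)) *
        (∏ u ∈ U, phi c (x i) (x u))) * FF c x I i * Φ (I.erase i)) Ψ := by
    rw [actD, map_sum, ← lowD Ψ]
    exact Finset.sum_congr rfl fun i _ => by
      rw [map_smul, hL _ (hdis _ (Finset.erase_subset _ _))]
  have eC : L (C (x a) (bv S)) = ZZ c x X (fun I => ∑ i ∈ I, (lam2 (x i) *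
        (c / (x i - x a + c)) *
        (∏ u ∈ U, phi c (x i) (x u))) * FF c x I i * Φ (I.erase i))
        (fun I => ∑ i ∈ I, (lam1 (x i) * (-c / (x i - x a + -c)) *
        (∏ u ∈ U, phi (-c) (x i) (x u))) * FF (-c) x I i * Ψ (I.erase i)) := by
    rw [actC, map_sum, ← lowD]
    refine Finset.sum_congr rfl fun j _ => ?_
    rw [map_smul, map_sum, ← lowA _ (hdis _ (Finset.erase_subset _ _))]
    congr 1
    exact Finset.sum_congr rfl fun i _ => by rw [map_smul]
  rw [hE, map_add, map_add, map_add, map_smul, map_smul, map_smul, eA, eB, eC, eD]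
  simp only [smul_eq_mul]
  rw [ZZ_bilin]
  unfold ZZ
  refine Finset.sum_congr rfl fun I _ => ?_
  beta_reduce
  rw [hΦ, hΨ, Phi_rec c β1 μ hβ1 lam2 x hx U a ha I,
    Phi_rec (-c) β2 μ hβ2 lam1 x hx.neg U a ha (X \ I)]
  ring

lemma main_ind (c : ℂ) (x : ι → ℂ) (hx : Good c x) (A B C D E : ℂ → Module.End ℂ V)
    (bv : Finset ι → V) (lam1 lam2 : ℂ → ℂ)
    (hbv : ∀ S b, b ∉ S → bv (insert b S) = B (x b) (bv S))
    (h1 : ∀ u, A u (bv ∅) = lam1 u • bv ∅)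
    (h2 : ∀ u, D u (bv ∅) = lam2 u • bv ∅)
    (h3 : ∀ u, C u (bv ∅) = 0)
    (hc : c ≠ 0)
    (hAB : ∀ u v, u ≠ v → ∀ w, A u (B v w) = fC c v u • B v (A u w) + gC c u v • B u (A v w))
    (hDB : ∀ u v, u ≠ v → ∀ w, D u (B v w) = fC c u v • B v (D u w) + gC c v u • B u (D v w))
    (hCB : ∀ u v, u ≠ v → ∀ w, C u (B v w) = B v (C u w) + gC c u v • (A v (D u w) - A u (D v w)))
    (β1 β2 μ : ℂ) (hβ1 : β1 ≠ 0) (hβ2 : β2 ≠ 0)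
    (hE : ∀ u w, E u w = C u w + β1 • A u w + β2 • D u w + (β1 * β2) • B u w)
    (eo : Finset ι → Module.End ℂ V) (heo0 : eo ∅ = 1)
    (heo : ∀ U a, a ∉ U → eo (insert a U) = eo U * E (x a))
    (L : V →ₗ[ℂ] ℂ)
    (hL : ∀ S, L (bv S) = (1 - μ) ^ S.card * ZZ c x S
      (fun I => (-β1) ^ (-(I.card : ℤ)) * ∏ i ∈ I, lam2 (x i))
      (fun I => (-β2) ^ (-(I.card : ℤ)) * ∏ i ∈ I, lam1 (x i)))
    (U : Finset ι) : ∀ S, Disjoint U S →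
    L (eo U (bv S))
      = ZZ c x (U ∪ S) (Phi c β1 μ lam2 x U) (Phi (-c) β2 μ lam1 x U) := by
  induction U using Finset.induction_on with
  | empty =>
    intro S _
    simp only [heo0, Module.End.one_apply, Finset.empty_union]
    rw [hL]
    unfold ZZ Phi
    rw [Finset.mul_sum]
    refine Finset.sum_congr rfl fun I hI => ?_
    rw [Finset.mem_powerset] at hI
    simp only [Finset.prod_empty, Finset.card_empty, Nat.cast_zero, zero_sub]
    rw [KS_one c μ x hx.1, KS_one (-c) μ x hx.1, ← Finset.card_sdiff_add_card_eq_card hI, pow_add]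
    ring
  | insert a U ha ih =>
    intro S hS
    rw [heo U a ha, Module.End.mul_apply]
    exact main_step c x hx A B C D E bv lam1 lam2 hbv h1 h2 h3 hc hAB hDB hCB β1 β2 μ hβ1 hβ2 hE U
      (L ∘ₗ eo U)
      (fun S hS => ih S hS) a ha S hS

end main

/-! ### Assembly -/

section asm

lemma ZZ_map {ι κ : Type*} [DecidableEq ι] [Fintype κ] [DecidableEq κ] (c : ℂ) (x : ι → ℂ)
    (e : κ ↪ ι) (Φ Ψ : Finset ι → ℂ) :
    ZZ c x (Finset.univ.map e) Φ Ψ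
      = ∑ s : Finset κ, Φ (s.map e) * Ψ (sᶜ.map e) * ff c x (s.map e) (sᶜ.map e) := by
  unfold ZZ
  symm
  refine Finset.sum_bij (fun s _ => s.map e) ?_ ?_ ?_ ?_
  · intro s _
    rw [Finset.mem_powerset]
    exact Finset.map_subset_map.2 (Finset.subset_univ s)
  · intro s _ t _ h
    exact Finset.map_injective e h
  · intro I hI
    rw [Finset.mem_powerset, Finset.subset_map_iff] at hI
    obtain ⟨s, _, hs⟩ := hI
    exact ⟨s, Finset.mem_univ _, hs.symm⟩
  · intro s _
    have : Finset.univ.map e \ s.map e = sᶜ.map e := by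
      rw [Finset.compl_eq_univ_sdiff]
      ext a
      simp only [Finset.mem_sdiff, Finset.mem_map, Finset.mem_univ, true_and]
      constructor
      · rintro ⟨⟨k, rfl⟩, h⟩
        exact ⟨k, fun hk => h ⟨k, hk, rfl⟩, rfl⟩
      · rintro ⟨k, hk, rfl⟩
        refine ⟨⟨k, rfl⟩, ?_⟩
        rintro ⟨l, hl, h⟩
        exact hk (e.injective h ▸ hl)
    rw [this]

variable {ι : Type*} [DecidableEq ι] {V : Type*} [AddCommGroup V] [Module ℂ V]

lemma pwc (E : ℂ → Module.End ℂ V) (hE : ∀ p q, Commute (E p) (E q)) (x : ι → ℂ)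
    (S : Finset ι) : (S : Set ι).Pairwise (Function.onFun Commute fun i => E (x i)) :=
  fun _ _ _ _ _ => hE _ _

def oprod (E : ℂ → Module.End ℂ V) (hE : ∀ p q, Commute (E p) (E q)) (x : ι → ℂ)
    (S : Finset ι) : Module.End ℂ V :=
  S.noncommProd (fun i => E (x i)) (pwc E hE x S)

lemma oprod_empty (E : ℂ → Module.End ℂ V) (hE : ∀ p q, Commute (E p) (E q)) (x : ι → ℂ) :
    oprod E hE x ∅ = 1 := by
  simp [oprod]

lemma oprod_insert (E : ℂ → Module.End ℂ V) (hE : ∀ p q, Commute (E p) (E q)) (x : ι → ℂ)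
    {S : Finset ι} {b : ι} (hb : b ∉ S) :
    oprod E hE x (insert b S) = E (x b) * oprod E hE x S := by
  unfold oprod
  rw [Finset.noncommProd_insert_of_notMem _ _ _ _ hb]

lemma oprod_insert' (E : ℂ → Module.End ℂ V) (hE : ∀ p q, Commute (E p) (E q)) (x : ι → ℂ)
    {S : Finset ι} {b : ι} (hb : b ∉ S) :
    oprod E hE x (insert b S) = oprod E hE x S * E (x b) := by
  unfold oprod
  rw [Finset.noncommProd_insert_of_notMem' _ _ _ _ hb]

lemma opProd_eq (E : ℂ → Module.End ℂ V) (hE : ∀ p q, Commute (E p) (E q)) (x : ι → ℂ)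
    {p : ℕ} (e : Fin p ↪ ι) :
    opProd E (fun i => x (e i)) Finset.univ = oprod E hE x (Finset.univ.map e) := by
  have hl : ((List.finRange p).map e).toFinset = Finset.univ.map e := by
    ext a; simp
  have hnd : ((List.finRange p).map e).Nodup := (List.nodup_finRange p).map e.injective
  unfold opProd oprod
  have h := Finset.noncommProd_toFinset ((List.finRange p).map e) (fun i => E (x i))
    (pwc E hE x _) hnd
  have h2 := Finset.noncommProd_congr (f := fun i => E (x i)) hl (fun _ _ => rfl) (pwc E hE x _)
  rw [Fin.sort_univ]
  rw [← h2, h, List.map_map]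
  rfl

lemma fC_eq (c u v : ℂ) (h : u ≠ v) : fC c u v = 1 + gC c u v := by
  have := sub_ne_zero.2 h
  unfold fC gC; field_simp

lemma gC_symm (c u v : ℂ) : gC c u v = - gC c v u := by
  unfold gC; rw [← neg_div_neg_eq, ← neg_div, neg_div, neg_div]; congr 2; ring

lemma hY_apply {N : Fin 2 → Fin 2 → ℂ → Module.End ℂ V} {c : ℂ}
    (hYang : ∀ (i j k l : Fin 2) (x y : ℂ), x ≠ y →
      N i j x * N k l y - N k l y * N i j x
        = gC c x y • (N k j y * N i l x - N k j x * N i l y))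
    (i j k l : Fin 2) (p q : ℂ) (h : p ≠ q) (w : V) :
    N i j p (N k l q w) - N k l q (N i j p w)
      = gC c p q • (N k j q (N i l p w) - N k j p (N i l q w)) :=
  LinearMap.congr_fun (hYang i j k l p q h) w

lemma op_AB (c β2 : ℂ) (N : Fin 2 → Fin 2 → ℂ → Module.End ℂ V)
    (hYang : ∀ (i j k l : Fin 2) (x y : ℂ), x ≠ y →
      N i j x * N k l y - N k l y * N i j x
        = gC c x y • (N k j y * N i l x - N k j x * N i l y))
    (hCommSame : ∀ (i j : Fin 2) (x y : ℂ), N i j x * N i j y = N i j y * N i j x)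
    (p q : ℂ) (hpq : p ≠ q) (w : V) :
    (N 0 0 p - β2 • N 0 1 p) (N 0 1 q w)
      = fC c q p • N 0 1 q ((N 0 0 p - β2 • N 0 1 p) w)
        + gC c p q • N 0 1 p ((N 0 0 q - β2 • N 0 1 q) w) := by
  have h := hY_apply hYang 0 1 0 0 q p hpq.symm w
  have hh : N 0 1 p (N 0 1 q w) = N 0 1 q (N 0 1 p w) :=
    LinearMap.congr_fun (hCommSame 0 1 p q) w
  rw [fC_eq c q p hpq.symm, gC_symm c p q]
  simp only [LinearMap.sub_apply, LinearMap.smul_apply, map_sub, map_smul, hh]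
  linear_combination (norm := module) (-1 : ℂ) • h

lemma op_DB (c β1 : ℂ) (N : Fin 2 → Fin 2 → ℂ → Module.End ℂ V)
    (hYang : ∀ (i j k l : Fin 2) (x y : ℂ), x ≠ y →
      N i j x * N k l y - N k l y * N i j x
        = gC c x y • (N k j y * N i l x - N k j x * N i l y))
    (hCommSame : ∀ (i j : Fin 2) (x y : ℂ), N i j x * N i j y = N i j y * N i j x)
    (p q : ℂ) (hpq : p ≠ q) (w : V) :
    (N 1 1 p - β1 • N 0 1 p) (N 0 1 q w)
      = fC c p q • N 0 1 q ((N 1 1 p - β1 • N 0 1 p) w)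
        + gC c q p • N 0 1 p ((N 1 1 q - β1 • N 0 1 q) w) := by
  have h := hY_apply hYang 1 1 0 1 p q hpq w
  have hh : N 0 1 p (N 0 1 q w) = N 0 1 q (N 0 1 p w) :=
    LinearMap.congr_fun (hCommSame 0 1 p q) w
  rw [fC_eq c p q hpq, gC_symm c q p]
  simp only [LinearMap.sub_apply, LinearMap.smul_apply, map_sub, map_smul, hh]
  linear_combination (norm := module) (1 : ℂ) • h

lemma op_CB (c β1 β2 : ℂ) (N : Fin 2 → Fin 2 → ℂ → Module.End ℂ V)
    (hYang : ∀ (i j k l : Fin 2) (x y : ℂ), x ≠ y →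
      N i j x * N k l y - N k l y * N i j x
        = gC c x y • (N k j y * N i l x - N k j x * N i l y))
    (hCommSame : ∀ (i j : Fin 2) (x y : ℂ), N i j x * N i j y = N i j y * N i j x)
    (p q : ℂ) (hpq : p ≠ q) (w : V) :
    (N 1 0 p - β1 • N 0 0 p - β2 • N 1 1 p + (β1 * β2) • N 0 1 p) (N 0 1 q w)
      = N 0 1 q ((N 1 0 p - β1 • N 0 0 p - β2 • N 1 1 p + (β1 * β2) • N 0 1 p) w)
        + gC c p q • ((N 0 0 q - β2 • N 0 1 q) ((N 1 1 p - β1 • N 0 1 p) w)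
          - (N 0 0 p - β2 • N 0 1 p) ((N 1 1 q - β1 • N 0 1 q) w)) := by
  have h1 := hY_apply hYang 1 0 0 1 p q hpq w
  have h2 := hY_apply hYang 0 0 0 1 p q hpq w
  have h3 := hY_apply hYang 1 1 0 1 p q hpq w
  have hh : N 0 1 p (N 0 1 q w) = N 0 1 q (N 0 1 p w) :=
    LinearMap.congr_fun (hCommSame 0 1 p q) w
  simp only [LinearMap.sub_apply, LinearMap.smul_apply, LinearMap.add_apply, map_sub, map_smul,
    map_add, hh]
  linear_combination (norm := module) (1 : ℂ) • h1 - β1 • h2 - β2 • h3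

end asm

/-- The scalar product of modified Bethe vectors (Theorem `MSPfor` of the paper). -/
theorem stmt6
    (c : ℂ) (hc : c ≠ 0) (β1 β2 μ : ℂ) (hβ1 : β1 ≠ 0) (hβ2 : β2 ≠ 0)
    (V : Type*) [AddCommGroup V] [Module ℂ V]
    (N : Fin 2 → Fin 2 → ℂ → Module.End ℂ V)
    (vac : V) (lam1 lam2 : ℂ → ℂ) (vacDual : V →ₗ[ℂ] ℂ)
    (hYang : ∀ (i j k l : Fin 2) (x y : ℂ), x ≠ y →
      N i j x * N k l y - N k l y * N i j x
        = gC c x y • (N k j y * N i l x - N k j x * N i l y))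
    (hCommSame : ∀ (i j : Fin 2) (x y : ℂ), N i j x * N i j y = N i j y * N i j x)
    (hvac11 : ∀ x : ℂ, N 0 0 x vac = lam1 x • vac + β2 • (N 0 1 x vac))
    (hvac22 : ∀ x : ℂ, N 1 1 x vac = lam2 x • vac + β1 • (N 0 1 x vac))
    (hvac21 : ∀ x : ℂ, N 1 0 x vac
      = (β1 * lam1 x + β2 * lam2 x) • vac + (β1 * β2) • (N 0 1 x vac))
    (hnorm : vacDual vac = 1)
    (hAvg : ∀ (p : ℕ) (w : Fin p → ℂ), Generic c w →
      vacDual (opProd (N 0 1) w Finset.univ vac)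
        = (1 - μ) ^ p * ∑ s : Finset (Fin p),
            (-β1) ^ (-(s.card : ℤ)) * (-β2) ^ (-(sᶜ.card : ℤ)) *
              (∏ i ∈ s, lam2 (w i)) * (∏ i ∈ sᶜ, lam1 (w i)) * fSS c w s sᶜ)
    (n m : ℕ) (u : Fin n → ℂ) (v : Fin m → ℂ)
    (hgen : Generic c (Fin.append u v)) :
    vacDual ((opProd (N 1 0) u Finset.univ * opProd (N 0 1) v Finset.univ) vac)
      = ∑ s : Finset (Fin (n + m)),
          (-β1) ^ ((n : ℤ) - (s.card : ℤ)) * (-β2) ^ ((n : ℤ) - (sᶜ.card : ℤ)) *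
            (∏ i ∈ s, lam2 (Fin.append u v i)) *
            (∏ i ∈ sᶜ, lam1 (Fin.append u v i)) *
            fSS c (Fin.append u v) s sᶜ *
            KIz c μ u (fun i => restr (Fin.append u v) s i + c) *
            KIzBar c μ u (fun i => restr (Fin.append u v) sᶜ i - c) := by
  have hAB : ∀ p q, p ≠ q → ∀ w, (N 0 0 p - β2 • N 0 1 p) (N 0 1 q w)
      = fC c q p • N 0 1 q ((N 0 0 p - β2 • N 0 1 p) w)
        + gC c p q • N 0 1 p ((N 0 0 q - β2 • N 0 1 q) w) := by
    intro p q hpq w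
    exact op_AB c β2 N hYang hCommSame p q hpq w
  have hDB : ∀ p q, p ≠ q → ∀ w, (N 1 1 p - β1 • N 0 1 p) (N 0 1 q w)
      = fC c p q • N 0 1 q ((N 1 1 p - β1 • N 0 1 p) w)
        + gC c q p • N 0 1 p ((N 1 1 q - β1 • N 0 1 q) w) := by
    intro p q hpq w
    exact op_DB c β1 N hYang hCommSame p q hpq w
  have hCB := op_CB c β1 β2 N hYang hCommSame
  have hx : Good c (Fin.append u v) := by
    refine ⟨fun i j hij => (hgen i j hij).1, fun i j => ?_⟩
    by_cases hij : i = j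
    · subst hij; simpa using hc
    · intro h; exact (hgen i j hij).2.2.1 (by linear_combination h)
  have hcm : ∀ i j, ∀ p q, Commute (N i j p) (N i j q) := fun i j p q => hCommSame i j p q
  set x := Fin.append u v with hxdef
  set U : Finset (Fin (n + m)) := Finset.univ.map (Fin.castAddEmb m) with hU
  set S : Finset (Fin (n + m)) := Finset.univ.map (Fin.natAddEmb n) with hS
  have hUS : Disjoint U S := by
    rw [Finset.disjoint_left]
    intro a ha hb
    simp only [hU, hS, Finset.mem_map, Finset.mem_univ, true_and] at ha hb
    obtain ⟨i, rfl⟩ := ha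
    obtain ⟨j, hj⟩ := hb
    have := congrArg Fin.val hj
    simp at this
    have := i.2
    omega
  have hun : U ∪ S = Finset.univ := by
    ext a
    simp only [hU, hS, Finset.mem_union, Finset.mem_map, Finset.mem_univ, true_and, iff_true]
    induction a using Fin.addCases with
    | left i => exact Or.inl ⟨i, rfl⟩
    | right i => exact Or.inr ⟨i, rfl⟩
  have hmain := main_ind c x hx (fun p => N 0 0 p - β2 • N 0 1 p) (N 0 1)
    (fun p => N 1 0 p - β1 • N 0 0 p - β2 • N 1 1 p + (β1 * β2) • N 0 1 p)
    (fun p => N 1 1 p - β1 • N 0 1 p) (N 1 0)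
    (fun S => oprod (N 0 1) (hcm 0 1) x S vac) lam1 lam2
    (by
      intro S b hb
      rw [oprod_insert _ _ _ hb, Module.End.mul_apply])
    (by
      intro p
      simp [oprod_empty, hvac11])
    (by
      intro p
      simp [oprod_empty, hvac22])
    (by
      intro p
      simp only [oprod_empty, Module.End.one_apply, LinearMap.add_apply, LinearMap.sub_apply,
        LinearMap.smul_apply, hvac11, hvac22, hvac21]
      module)
    hc hAB hDB hCB β1 β2 μ hβ1 hβ2
    (by
      intro p w
      simp only [LinearMap.add_apply, LinearMap.sub_apply, LinearMap.smul_apply]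
      module)
    (oprod (N 1 0) (hcm 1 0) x) (oprod_empty _ _ _)
    (fun U a ha => oprod_insert' _ _ _ ha)
    vacDual
    (by
      intro T
      have hinj : Function.Injective (T.orderEmbOfFin rfl) := (T.orderEmbOfFin rfl).injective
      have h := hAvg T.card (fun i => x (T.orderEmbOfFin rfl i))
        (fun i j hij => hgen _ _ (fun h => hij (hinj h)))
      have hT : Finset.univ.map (T.orderEmbOfFin rfl).toEmbedding = T := by
        ext a
        simp only [Finset.mem_map, Finset.mem_univ, true_and]
        have := Finset.range_orderEmbOfFin T rfl
        rw [← Finset.mem_coe, ← this]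
        rfl
      have hop := opProd_eq (N 0 1) (hcm 0 1) x (T.orderEmbOfFin rfl).toEmbedding
      rw [hT] at hop
      rw [← hop]
      refine h.trans ?_
      congr 1
      conv_rhs => rw [← hT]
      rw [ZZ_map]
      refine Finset.sum_congr rfl fun s _ => ?_
      simp only [fSS, ff, Finset.card_map, Finset.prod_map]
      simp only [RelEmbedding.coe_toEmbedding]
      ring)
    U S hUS
  have e1 : opProd (N 1 0) u Finset.univ = oprod (N 1 0) (hcm 1 0) x U := by
    rw [← opProd_eq (N 1 0) (hcm 1 0) x (Fin.castAddEmb m)]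
    congr 1
    ext i
    simp [hxdef]
  have e2 : opProd (N 0 1) v Finset.univ = oprod (N 0 1) (hcm 0 1) x S := by
    rw [← opProd_eq (N 0 1) (hcm 0 1) x (Fin.natAddEmb n)]
    congr 1
    ext i
    simp [hxdef]
  rw [e1, e2, Module.End.mul_apply]
  refine hmain.trans ?_
  rw [hun]
  unfold ZZ
  rw [Finset.powerset_univ]
  refine Finset.sum_congr rfl fun s _ => ?_
  have k1 : KIz c μ u (fun i => restr x s i + c)
      = KS c μ x (fun j => ∏ a ∈ U, phi c (x j) (x a)) s := by
    refine (KIz_eq c μ hc x hx u s).trans ?_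
    congr 1
    ext j
    rw [hU, Finset.prod_map]
    refine Finset.prod_congr rfl fun i _ => ?_
    simp [hxdef]
  have k2 : KIzBar c μ u (fun i => restr x sᶜ i - c)
      = KS (-c) μ x (fun j => ∏ a ∈ U, phi (-c) (x j) (x a)) sᶜ := by
    refine (KIz_eq (-c) μ (neg_ne_zero.2 hc) x hx.neg u sᶜ).trans ?_
    congr 1
    ext j
    rw [hU, Finset.prod_map]
    refine Finset.prod_congr rfl fun i _ => ?_
    simp [hxdef]
  rw [k1, k2, ← Finset.compl_eq_univ_sdiff]
  have hUc : U.card = n := by simp [hU]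
  unfold Phi fSS ff
  rw [hUc]
  ring
end
end
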